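/- There exists a constant C_p > 0 depending only on p such that, whenever N_n ≤ 1, for all t1, t2 ≥ 0 with t1 ≤ 1, t2 ≤ 1 and t1 + t2 ≤ 1, and all x ≤ 0, P( S_n ≤ x · √( t1·⟨S⟩_n + t2·[S]_n + (1 − t1 − t2) ) ) − Φ(x) ≤ C_p · N_n^{1/(2p+1)}. -/

import Mathlib

open MeasureTheory Filter Finset

/-- The standard normal distribution function
`Φ(x) = (2π)^{-1/2} ∫_{-∞}^x e^{-u²/2} du`. -/
noncomputable def stdNormalCDF (x : ℝ) : ℝ :=
  ∫ u in Set.Iic x, (Real.sqrt (2 * Real.pi))⁻¹ * Real.exp (-u ^ 2 / 2)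

/-!
Replacing `X` by `L X`, which makes the target variance `L²`, it suffices to prove the bound with
error `C (L⁻¹ + L^(2p) N)`; the choice `L = N^(-1/(2p+1))` balances the two terms.

After scaling, `S ≤ x √(t₁⟨S⟩ + t₂[S] + (1 - t₁ - t₂) L²)` with `x ≤ 0` forces one of three events.

* `|⟨S⟩ - L²| ≥ 1`, which is controlled by Markov's inequality.
* `[S] ≤ (1 - 2/L) ⟨S⟩ - 2L + 1 - 2/L`. Here `exp (l ((1 - 2/L) ⟨S⟩ - [S]))`, capped at `1`, is a
  supermartingale up to a total error of `2 ∑ E|X|^(2p)`: the factor `1 - 2/L` supplies the drift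
  that compensates the second-order term of the exponential for small jumps, and a large jump costs
  at most its `|X|^(2p)`.
* `S ≤ x √(L² - 4L)` while `⟨S⟩ ≈ L²`. Here one follows a potential `V(s, v)` along `s = S - y`,
  with `v` the remaining variance. The normal tail `Φ(-s/√v)` solves the heat equation, so its mean
  changes only by third-order Taylor remainders. Adding a small multiple of a Gaussian density makes
  `V` a strict supersolution, and the resulting gain absorbs these remainders up to `|X|^(2p)`.
-/

open ProbabilityTheory

local notation "φ" => gaussianPDFReal 0 1

section StandardNormal

theorem gaussianPDFReal_zero_one (z : ℝ) : φ z = (√(2 * Real.pi))⁻¹ * Real.exp (-z ^ 2 / 2) := by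
  simp [gaussianPDFReal]

theorem stdNormalCDF_eq_integral_gaussianPDFReal (x : ℝ) :
    stdNormalCDF x = ∫ u in Set.Iic x, φ u := by
  simp only [stdNormalCDF, gaussianPDFReal_zero_one]

theorem stdNormalCDF_eq_cdf (x : ℝ) : stdNormalCDF x = cdf (gaussianReal 0 1) x := by
  rw [cdf_eq_real, measureReal_def, gaussianReal_apply_eq_integral 0 one_ne_zero,
    ENNReal.toReal_ofReal (integral_nonneg (gaussianPDFReal_nonneg 0 1)),
    stdNormalCDF_eq_integral_gaussianPDFReal]

theorem stdNormalCDF_nonneg (x : ℝ) : 0 ≤ stdNormalCDF x :=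
  stdNormalCDF_eq_cdf x ▸ cdf_nonneg _ x

theorem stdNormalCDF_le_one (x : ℝ) : stdNormalCDF x ≤ 1 :=
  stdNormalCDF_eq_cdf x ▸ cdf_le_one _ x

theorem hasDerivAt_stdNormalCDF (x : ℝ) : HasDerivAt stdNormalCDF (φ x) x := by
  have hcont : Continuous φ := by
    simpa only [funext gaussianPDFReal_zero_one] using by fun_prop
  have hint : Integrable φ := integrable_gaussianPDFReal 0 1
  have hsplit : stdNormalCDF = fun y ↦ (∫ u in (0 : ℝ)..y, φ u) + stdNormalCDF 0 := by
    funext y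
    simp only [stdNormalCDF_eq_integral_gaussianPDFReal]
    rw [← intervalIntegral.integral_Iic_sub_Iic hint.integrableOn hint.integrableOn,
      sub_add_cancel]
  rw [hsplit]
  exact (intervalIntegral.integral_hasDerivAt_right (hcont.intervalIntegrable _ _)
    (hcont.stronglyMeasurableAtFilter _ _) hcont.continuousAt).add_const _

theorem hasDerivAt_gaussianPDFReal_zero_one (z : ℝ) : HasDerivAt φ (-z * φ z) z := by
  have hsq : HasDerivAt (fun y : ℝ ↦ -y ^ 2 / 2) (-z) z := by
    exact ((hasDerivAt_pow 2 z).neg.div_const 2).congr_deriv (by push_cast; ring)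
  rw [funext gaussianPDFReal_zero_one]
  exact (hsq.exp.const_mul _).congr_deriv (by ring)

theorem hasSubgaussianMGF_id_gaussianReal_zero_one : HasSubgaussianMGF id 1 (gaussianReal 0 1) where
  integrable_exp_mul := integrable_exp_mul_gaussianReal
  mgf_le t := by simp [mgf_id_gaussianReal]

theorem one_sub_exp_le_stdNormalCDF {z : ℝ} (hz : 0 ≤ z) :
    1 - Real.exp (-z ^ 2 / 2) ≤ stdNormalCDF z := by
  have htail : (gaussianReal 0 1).real {u | z ≤ u} ≤ Real.exp (-z ^ 2 / 2) := by
    simpa using hasSubgaussianMGF_id_gaussianReal_zero_one.measure_ge_le hz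
  have hcompl : (gaussianReal 0 1).real (Set.Iic z)ᶜ ≤ (gaussianReal 0 1).real {u | z ≤ u} :=
    measureReal_mono fun u hu ↦ (not_le.1 (Set.mem_Iic.not.1 hu)).le
  rw [probReal_compl_eq_one_sub measurableSet_Iic] at hcompl
  rw [stdNormalCDF_eq_cdf, cdf_eq_real]
  linarith

theorem inv_sqrt_two_pi_le_one : (√(2 * Real.pi))⁻¹ ≤ 1 :=
  inv_le_one_of_one_le₀ (Real.one_le_sqrt.2 (by linarith [Real.pi_gt_three]))

theorem abs_mul_gaussianPDFReal_zero_one_le_one (z : ℝ) : |z * φ z| ≤ 1 := by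
  have hexp : |z| * Real.exp (-z ^ 2 / 2) ≤ 1 := by
    rw [neg_div, Real.exp_neg, ← div_eq_mul_inv, div_le_one (Real.exp_pos _)]
    nlinarith [Real.add_one_le_exp (z ^ 2 / 2), sq_abs z, sq_nonneg (|z| - 1)]
  calc |z * φ z| = (√(2 * Real.pi))⁻¹ * (|z| * Real.exp (-z ^ 2 / 2)) := by
        rw [abs_mul, abs_of_nonneg (gaussianPDFReal_nonneg 0 1 z), gaussianPDFReal_zero_one]
        ring
    _ ≤ 1 * 1 := by gcongr; exact inv_sqrt_two_pi_le_one
    _ = 1 := one_mul 1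

-- `r ↦ Φ(xr) + log r` has the nonnegative derivative `(1 + xr φ(xr)) / r`.
theorem stdNormalCDF_mul_sub_le_neg_log {r : ℝ} (hr₀ : 0 < r) (hr₁ : r ≤ 1) (x : ℝ) :
    stdNormalCDF (x * r) - stdNormalCDF x ≤ -Real.log r := by
  have hderiv : ∀ s > 0, HasDerivAt (fun s ↦ stdNormalCDF (x * s) + Real.log s)
      ((x * s * φ (x * s) + 1) / s) s := fun s hs ↦ by
    have hcdf : HasDerivAt (fun s ↦ stdNormalCDF (x * s)) (φ (x * s) * x) s :=
      (hasDerivAt_stdNormalCDF (x * s)).comp s (by simpa using (hasDerivAt_id s).const_mul x)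
    exact (hcdf.add (Real.hasDerivAt_log hs.ne')).congr_deriv (by field_simp)
  have hmono : MonotoneOn (fun s ↦ stdNormalCDF (x * s) + Real.log s) (Set.Ioi 0) := by
    refine monotoneOn_of_hasDerivWithinAt_nonneg (convex_Ioi 0)
      (fun s hs ↦ (hderiv s hs).continuousAt.continuousWithinAt)
      (fun s hs ↦ (hderiv s (interior_subset hs)).hasDerivWithinAt) fun s hs ↦ ?_
    have := (abs_le.1 (abs_mul_gaussianPDFReal_zero_one_le_one (x * s))).1
    exact div_nonneg (by linarith) (Set.mem_Ioi.1 (interior_subset hs)).le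
  have := hmono hr₀ (Set.mem_Ioi.2 one_pos) hr₁
  simp only [mul_one, Real.log_one, add_zero] at this
  linarith

end StandardNormal

section Taylor

theorem taylor_remainder_le {f : ℕ → ℝ → ℝ} {a b L : ℝ} (n : ℕ)
    (hderiv : ∀ i < n, ∀ y ∈ Set.uIcc a b, HasDerivAt (f i) (f (i + 1) y) y)
    (hbound : ∀ y ∈ Set.uIcc a b, |f n y| ≤ L) :
    |f 0 b - ∑ i ∈ range n, f i a * (b - a) ^ i / i.factorial| ≤ L * |b - a| ^ n := by
  induction n generalizing f b with
  | zero => simpa using hbound b Set.right_mem_uIcc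
  | succ n ih =>
    have hL : 0 ≤ L := (abs_nonneg _).trans (hbound b Set.right_mem_uIcc)
    let r : ℝ → ℝ := fun y ↦ f 0 y - ∑ i ∈ range (n + 1), f i a * (y - a) ^ i / i.factorial
    have hr_deriv : ∀ y ∈ Set.uIcc a b, HasDerivAt r
        (f 1 y - ∑ i ∈ range n, f (i + 1) a * (y - a) ^ i / i.factorial) y := fun y hy ↦ by
      have hterm (i : ℕ) : HasDerivAt
          (fun y ↦ f (i + 1) a * (y - a) ^ (i + 1) / (i + 1).factorial)
          (f (i + 1) a * (y - a) ^ i / i.factorial) y := by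
        have hpow : HasDerivAt (fun y : ℝ ↦ (y - a) ^ (i + 1)) ((i + 1) * (y - a) ^ i) y := by
          simpa using ((hasDerivAt_id y).sub_const a).fun_pow (i + 1)
        refine ((hpow.const_mul (f (i + 1) a)).div_const _).congr_deriv ?_
        rw [Nat.factorial_succ]
        push_cast
        field_simp
      have hsum := HasDerivAt.fun_sum fun i (_ : i ∈ range n) ↦ hterm i
      simp only [r, sum_range_succ']
      simpa using (hderiv 0 n.succ_pos y hy).fun_sub (hsum.add_const (f 0 a))
    have hr_bound : ∀ y ∈ Set.uIcc a b,
        ‖f 1 y - ∑ i ∈ range n, f (i + 1) a * (y - a) ^ i / i.factorial‖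
          ≤ L * |b - a| ^ n := fun y hy ↦ by
      have hsub : Set.uIcc a y ⊆ Set.uIcc a b := Set.uIcc_subset_uIcc_left hy
      refine (ih (f := fun i ↦ f (i + 1))
        (fun i hi z hz ↦ hderiv (i + 1) (by lia) z (hsub hz))
        fun z hz ↦ hbound z (hsub hz)).trans ?_
      exact mul_le_mul_of_nonneg_left
        (pow_le_pow_left₀ (abs_nonneg _) (Set.abs_sub_left_of_mem_uIcc hy) n) hL
    have hmean := (convex_uIcc a b).norm_image_sub_le_of_norm_hasDerivWithin_le
      (fun y hy ↦ (hr_deriv y hy).hasDerivWithinAt) hr_bound Set.left_mem_uIcc Set.right_mem_uIcc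
    have hr_a : r a = 0 := by simp [r, sum_range_succ']
    rwa [hr_a, sub_zero, Real.norm_eq_abs, Real.norm_eq_abs, mul_assoc, ← pow_succ] at hmean

end Taylor

section HermiteGaussian

open Polynomial

theorem derivative_hermite_succ (n : ℕ) :
    derivative (hermite (n + 1)) = ((n : ℤ[X]) + 1) * hermite n := by
  induction n with
  | zero => simp [hermite_succ]
  | succ n ih =>
    rw [hermite_succ (n + 1), derivative_sub, derivative_mul, ih, derivative_mul]
    simp only [derivative_X, derivative_add, derivative_natCast, derivative_one, Nat.cast_add,
      Nat.cast_one]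
    linear_combination (-(n : ℤ[X]) - 1) * hermite_succ n

theorem aeval_hermite_add_two (n : ℕ) (z : ℝ) :
    aeval z (hermite (n + 2)) = z * aeval z (hermite (n + 1)) - (n + 1) * aeval z (hermite n) := by
  rw [hermite_succ (n + 1), derivative_hermite_succ]
  simp

theorem hasDerivAt_hermite_mul_gaussian (n : ℕ) (z : ℝ) :
    HasDerivAt (fun z ↦ aeval z (hermite n) * φ z) (-(aeval z (hermite (n + 1)) * φ z)) z := by
  refine ((Polynomial.hasDerivAt_aeval (hermite n) z).mul
    (hasDerivAt_gaussianPDFReal_zero_one z)).congr_deriv ?_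
  simp only [hermite_succ, map_sub, map_mul, aeval_X]
  ring

theorem exists_abs_aeval_le_mul_exp (P : ℤ[X]) {c : ℝ} (hc : 0 < c) :
    ∃ C, 0 ≤ C ∧ ∀ z : ℝ, |aeval z P| ≤ C * Real.exp (c * z ^ 2) := by
  induction P using Polynomial.induction_on' with
  | add P Q hP hQ =>
    obtain ⟨C, hC, hP⟩ := hP
    obtain ⟨D, hD, hQ⟩ := hQ
    refine ⟨C + D, add_nonneg hC hD, fun z ↦ ?_⟩
    rw [map_add, add_mul]
    exact (abs_add_le _ _).trans (add_le_add (hP z) (hQ z))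
  | monomial n m =>
    refine ⟨|(m : ℝ)| * (1 + n.factorial / c ^ n), by positivity, fun z ↦ ?_⟩
    have hexp : 1 ≤ Real.exp (c * z ^ 2) := Real.one_le_exp (by positivity)
    have hpow : (z ^ 2) ^ n ≤ n.factorial / c ^ n * Real.exp (c * z ^ 2) := by
      have := Real.pow_div_factorial_le_exp (c * z ^ 2) (by positivity) n
      rw [mul_pow, div_le_iff₀ (by positivity)] at this
      rw [div_mul_eq_mul_div, le_div_iff₀ (by positivity)]
      linarith
    have habs : |z| ^ n ≤ 1 + (z ^ 2) ^ n := by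
      have hsq : (z ^ 2) ^ n = (|z| ^ n) ^ 2 := by rw [← sq_abs, pow_right_comm]
      nlinarith [sq_nonneg (|z| ^ n - 1)]
    rw [aeval_monomial, abs_mul, abs_pow, eq_intCast, mul_assoc]
    gcongr
    linarith

theorem exists_abs_hermite_mul_gaussian_le (n : ℕ) {κ : ℝ} (hκ₀ : 0 < κ) (hκ₁ : κ ≤ 1) (D : ℝ) :
    ∃ C, 0 ≤ C ∧ ∀ a b : ℝ, b ^ 2 ≤ (1 + κ) * a ^ 2 + D →
      |aeval a (hermite n) * φ a| ≤ C * Real.exp (-((1 - κ) * b ^ 2 / 2)) := by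
  obtain ⟨C, hC, hP⟩ := exists_abs_aeval_le_mul_exp (hermite n) (c := κ ^ 2 / 2) (by positivity)
  refine ⟨C * Real.exp ((1 - κ) * D / 2), by positivity, fun a b hab ↦ ?_⟩
  have hφ : φ a ≤ Real.exp (-a ^ 2 / 2) := by
    rw [gaussianPDFReal_zero_one]
    exact mul_le_of_le_one_left (Real.exp_pos _).le inv_sqrt_two_pi_le_one
  calc |aeval a (hermite n) * φ a|
      = |aeval a (hermite n)| * φ a := by rw [abs_mul, abs_of_nonneg (gaussianPDFReal_nonneg 0 1 a)]
    _ ≤ C * Real.exp (κ ^ 2 / 2 * a ^ 2) * Real.exp (-a ^ 2 / 2) :=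
        mul_le_mul (hP a) hφ (gaussianPDFReal_nonneg 0 1 a) (by positivity)
    _ = C * Real.exp (κ ^ 2 / 2 * a ^ 2 + -a ^ 2 / 2) := by rw [mul_assoc, ← Real.exp_add]
    _ ≤ C * Real.exp ((1 - κ) * D / 2 + -((1 - κ) * b ^ 2 / 2)) := by
        gcongr C * Real.exp ?_
        nlinarith [mul_le_mul_of_nonneg_left hab (sub_nonneg.2 hκ₁)]
    _ = C * Real.exp ((1 - κ) * D / 2) * Real.exp (-((1 - κ) * b ^ 2 / 2)) := by
        rw [Real.exp_add, mul_assoc]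

end HermiteGaussian

section NormalTail

open Polynomial

/-- The `j`-th derivative in `s` of the tail `P(√v Z > s) = Φ(-s/√v)` of a centred normal variable
of variance `v`, in closed form through the Hermite polynomials. -/
noncomputable def normalTailDeriv : ℕ → ℝ → ℝ → ℝ
  | 0, s, v => stdNormalCDF (-(s / √v))
  | j + 1, s, v => (-(√v)⁻¹) ^ (j + 1) * (aeval (s / √v) (hermite j) * φ (s / √v))

theorem hasDerivAt_div_sqrt (s : ℝ) {v : ℝ} (hv : 0 < v) :
    HasDerivAt (fun w ↦ s / √w) (-((√v)⁻¹ ^ 2 * (s / √v) / 2)) v := by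
  have hne : √v ≠ 0 := (Real.sqrt_pos.2 hv).ne'
  have := ((Real.hasDerivAt_sqrt hv.ne').fun_inv hne).const_mul s
  simp only [← div_eq_mul_inv] at this
  exact this.congr_deriv (by field_simp)

theorem hasDerivAt_normalTailDeriv_left (j : ℕ) (s : ℝ) (v : ℝ) :
    HasDerivAt (normalTailDeriv j · v) (normalTailDeriv (j + 1) s v) s := by
  have hz : HasDerivAt (· / √v) (√v)⁻¹ s := by
    simpa using (hasDerivAt_id s).div_const (√v)
  cases j with
  | zero =>
    refine ((hasDerivAt_stdNormalCDF _).comp s hz.fun_neg).congr_deriv ?_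
    simp [normalTailDeriv, gaussianPDFReal_zero_one, mul_comm]
  | succ j =>
    refine (((hasDerivAt_hermite_mul_gaussian j (s / √v)).comp s hz).const_mul _).congr_deriv ?_
    simp only [normalTailDeriv]
    ring

theorem hasDerivAt_normalTailDeriv_right (j : ℕ) (s : ℝ) {v : ℝ} (hv : 0 < v) :
    HasDerivAt (normalTailDeriv j s) (normalTailDeriv (j + 2) s v / 2) v := by
  have hz := hasDerivAt_div_sqrt s hv
  cases j with
  | zero =>
    refine ((hasDerivAt_stdNormalCDF _).comp v hz.fun_neg).congr_deriv ?_
    simp only [normalTailDeriv, gaussianPDFReal_zero_one, neg_sq, hermite_one, aeval_X]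
    ring
  | succ j =>
    have hρ : HasDerivAt (fun w ↦ (-(√w)⁻¹) ^ (j + 1))
        ((j + 1) * (-(√v)⁻¹) ^ j * ((√v)⁻¹ ^ 3 / 2)) v := by
      have := (hasDerivAt_div_sqrt 1 hv).fun_neg.fun_pow (j + 1)
      simp only [one_div] at this
      exact this.congr_deriv (by push_cast; ring)
    refine (hρ.mul ((hasDerivAt_hermite_mul_gaussian j (s / √v)).comp v hz)).congr_deriv ?_
    simp only [normalTailDeriv, Function.comp_apply, aeval_hermite_add_two]
    ring

theorem exists_abs_normalTailDeriv_succ_le (j : ℕ) {κ : ℝ} (hκ₀ : 0 < κ) (hκ₁ : κ ≤ 1) (D : ℝ) :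
    ∃ C, 0 ≤ C ∧ ∀ b s v : ℝ, b ^ 2 ≤ (1 + κ) * (s / √v) ^ 2 + D →
      |normalTailDeriv (j + 1) s v|
        ≤ C * ((√v)⁻¹ ^ (j + 1) * Real.exp (-((1 - κ) * b ^ 2 / 2))) := by
  obtain ⟨C, hC, h⟩ := exists_abs_hermite_mul_gaussian_le j hκ₀ hκ₁ D
  refine ⟨C, hC, fun b s v hb ↦ ?_⟩
  rw [normalTailDeriv, abs_mul, abs_pow, abs_neg, abs_of_nonneg (by positivity : 0 ≤ (√v)⁻¹),
    mul_left_comm]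
  exact mul_le_mul_of_nonneg_left (h _ b hb) (by positivity)

end NormalTail

section Potential

variable {κ M : ℝ}

/-- The potential `V = Φ(-s/√v) + M (2 - v^(-κ)) φ(s/√v) / √v` (for `j = 0`), and its `j`-th
derivative in `s`. The second term perturbs the normal tail so that `V` becomes a strict
supersolution of the heat equation: it increases in `v` at the extra rate `potentialGain`. -/
noncomputable def potentialDeriv (κ M : ℝ) (j : ℕ) (s v : ℝ) : ℝ :=
  normalTailDeriv j s v - M * (2 - v ^ (-κ)) * normalTailDeriv (j + 1) s v

/-- The excess `∂V/∂v - (1/2) ∂²V/∂s²` of the potential (for `j = 0`), and its `j`-th derivative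
in `s`. -/
noncomputable def potentialGain (κ M : ℝ) (j : ℕ) (s v : ℝ) : ℝ :=
  -(M * κ * v ^ (-κ - 1) * normalTailDeriv (j + 1) s v)

theorem hasDerivAt_potentialDeriv_left (j : ℕ) (s v : ℝ) :
    HasDerivAt (potentialDeriv κ M j · v) (potentialDeriv κ M (j + 1) s v) s :=
  (hasDerivAt_normalTailDeriv_left j s v).sub
    ((hasDerivAt_normalTailDeriv_left (j + 1) s v).const_mul _)

theorem hasDerivAt_potentialDeriv_right (j : ℕ) (s : ℝ) {v : ℝ} (hv : 0 < v) :
    HasDerivAt (potentialDeriv κ M j s)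
      (potentialDeriv κ M (j + 2) s v / 2 + potentialGain κ M j s v) v := by
  have hpow : HasDerivAt (fun w : ℝ ↦ M * (2 - w ^ (-κ))) (M * κ * v ^ (-κ - 1)) v :=
    (((Real.hasDerivAt_rpow_const (p := -κ) (Or.inl hv.ne')).const_sub 2).const_mul
      M).congr_deriv (by ring)
  refine ((hasDerivAt_normalTailDeriv_right j s hv).sub
    (hpow.mul (hasDerivAt_normalTailDeriv_right (j + 1) s hv))).congr_deriv ?_
  simp only [potentialDeriv, potentialGain]
  ring

theorem hasDerivAt_potentialGain_right (j : ℕ) (s : ℝ) {v : ℝ} (hv : 0 < v) :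
    HasDerivAt (potentialGain κ M j s)
      (potentialGain κ M (j + 2) s v / 2
        + M * κ * (κ + 1) * v ^ (-κ - 2) * normalTailDeriv (j + 1) s v) v := by
  have hpow : HasDerivAt (fun w : ℝ ↦ M * κ * w ^ (-κ - 1))
      (-(M * κ * (κ + 1) * v ^ (-κ - 2))) v := by
    refine ((Real.hasDerivAt_rpow_const (p := -κ - 1) (Or.inl hv.ne')).const_mul
      (M * κ)).congr_deriv ?_
    rw [show -κ - 1 - 1 = -κ - 2 by ring]
    ring
  refine (hpow.mul (hasDerivAt_normalTailDeriv_right (j + 1) s hv)).fun_neg.congr_deriv ?_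
  simp only [potentialGain]
  ring

theorem normalTailDeriv_one_nonpos (s v : ℝ) : normalTailDeriv 1 s v ≤ 0 := by
  have : 0 ≤ (√v)⁻¹ * φ (s / √v) := mul_nonneg (by positivity) (gaussianPDFReal_nonneg 0 1 _)
  simpa [normalTailDeriv] using this

theorem rpow_neg_mem_Icc (hκ : 0 ≤ κ) {v : ℝ} (hv : 1 ≤ v) : v ^ (-κ) ∈ Set.Icc (0 : ℝ) 1 :=
  ⟨by positivity, Real.rpow_le_one_of_one_le_of_nonpos hv (neg_nonpos.2 hκ)⟩

theorem inv_sqrt_le_one {v : ℝ} (hv : 1 ≤ v) : (√v)⁻¹ ≤ 1 :=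
  inv_le_one_of_one_le₀ (Real.one_le_sqrt.2 hv)

theorem potentialDeriv_zero_nonneg (hκ : 0 ≤ κ) (hM : 0 ≤ M) (s : ℝ) {v : ℝ} (hv : 1 ≤ v) :
    0 ≤ potentialDeriv κ M 0 s v := by
  have hcdf : 0 ≤ normalTailDeriv 0 s v := stdNormalCDF_nonneg _
  have hweight : 0 ≤ M * (2 - v ^ (-κ)) :=
    mul_nonneg hM (by linarith [(rpow_neg_mem_Icc hκ hv).2])
  exact sub_nonneg.2
    ((mul_nonpos_of_nonneg_of_nonpos hweight (normalTailDeriv_one_nonpos s v)).trans hcdf)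

theorem potentialGain_zero_nonneg (hκ : 0 ≤ κ) (hM : 0 ≤ M) (s : ℝ) {v : ℝ} (hv : 0 ≤ v) :
    0 ≤ potentialGain κ M 0 s v :=
  neg_nonneg.2 (mul_nonpos_of_nonneg_of_nonpos (by positivity) (normalTailDeriv_one_nonpos s v))

theorem potentialGain_zero_eq (s : ℝ) {v : ℝ} (hv : 0 < v) :
    potentialGain κ M 0 s v = M * κ * (√(2 * Real.pi))⁻¹ *
      (v ^ (-κ) * (√v)⁻¹ * (Real.exp (-(s / √v) ^ 2 / 2) / v)) := by
  simp only [potentialGain, normalTailDeriv, gaussianPDFReal_zero_one, Real.rpow_sub_one hv.ne',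
    zero_add, pow_one, Polynomial.hermite_zero, map_one]
  ring

theorem exists_abs_potentialDeriv_succ_le (j : ℕ) (hκ₀ : 0 < κ) (hκ₁ : κ ≤ 1) (hM : 0 ≤ M)
    (D : ℝ) :
    ∃ C, 0 ≤ C ∧ ∀ b s v : ℝ, 1 ≤ v → b ^ 2 ≤ (1 + κ) * (s / √v) ^ 2 + D →
      |potentialDeriv κ M (j + 1) s v|
        ≤ C * ((√v)⁻¹ ^ (j + 1) * Real.exp (-((1 - κ) * b ^ 2 / 2))) := by
  obtain ⟨C₁, hC₁, h₁⟩ := exists_abs_normalTailDeriv_succ_le j hκ₀ hκ₁ D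
  obtain ⟨C₂, hC₂, h₂⟩ := exists_abs_normalTailDeriv_succ_le (j + 1) hκ₀ hκ₁ D
  refine ⟨C₁ + M * 2 * C₂, by positivity, fun b s v hv hb ↦ ?_⟩
  obtain ⟨hpow₀, hpow₁⟩ := rpow_neg_mem_Icc hκ₀.le hv
  set E := Real.exp (-((1 - κ) * b ^ 2 / 2))
  calc |potentialDeriv κ M (j + 1) s v|
      ≤ |normalTailDeriv (j + 1) s v| + M * (2 - v ^ (-κ)) * |normalTailDeriv (j + 2) s v| := by
        refine (abs_sub _ _).trans_eq ?_
        rw [abs_mul, abs_of_nonneg (mul_nonneg hM (by linarith))]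
    _ ≤ C₁ * ((√v)⁻¹ ^ (j + 1) * E) + M * 2 * (C₂ * ((√v)⁻¹ ^ (j + 1) * E)) := by
        gcongr
        · exact h₁ b s v hb
        · linarith
        · refine (h₂ b s v hb).trans ?_
          gcongr C₂ * (?_ * E)
          exact pow_le_pow_of_le_one (by positivity) (inv_sqrt_le_one hv) (by lia)
    _ = (C₁ + M * 2 * C₂) * ((√v)⁻¹ ^ (j + 1) * E) := by ring

theorem exists_abs_potentialDeriv_le (j : ℕ) (hκ₀ : 0 < κ) (hκ₁ : κ ≤ 1) (hM : 0 ≤ M) :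
    ∃ C, 0 ≤ C ∧ ∀ s v : ℝ, 1 ≤ v → |potentialDeriv κ M j s v| ≤ C := by
  cases j with
  | zero =>
    obtain ⟨C, hC, h⟩ := exists_abs_normalTailDeriv_succ_le 0 hκ₀ hκ₁ 0
    refine ⟨1 + M * 2 * C, by positivity, fun s v hv ↦ ?_⟩
    obtain ⟨hpow₀, hpow₁⟩ := rpow_neg_mem_Icc hκ₀.le hv
    have hcdf : |normalTailDeriv 0 s v| ≤ 1 :=
      (abs_of_nonneg (stdNormalCDF_nonneg _)).trans_le (stdNormalCDF_le_one _)
    have hτ : |normalTailDeriv 1 s v| ≤ C := by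
      refine (h 0 s v (by rw [zero_pow two_ne_zero]; positivity)).trans
        (mul_le_of_le_one_right hC ?_)
      simpa using inv_sqrt_le_one hv
    refine (abs_sub _ _).trans (add_le_add hcdf ?_)
    rw [abs_mul, abs_of_nonneg (mul_nonneg hM (by linarith))]
    gcongr
    linarith
  | succ j =>
    obtain ⟨C, hC, h⟩ := exists_abs_potentialDeriv_succ_le j hκ₀ hκ₁ hM 0
    refine ⟨C, hC, fun s v hv ↦ ?_⟩
    refine (h 0 s v hv (by rw [zero_pow two_ne_zero]; positivity)).trans
      (mul_le_of_le_one_right hC ?_)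
    simpa using pow_le_one₀ (by positivity) (inv_sqrt_le_one hv)

theorem potentialGain_zero_le (hκ : 0 ≤ κ) (hM : 0 ≤ M) (s : ℝ) {v : ℝ} (hv : 1 ≤ v) :
    potentialGain κ M 0 s v ≤ M * κ := by
  have hexp : Real.exp (-(s / √v) ^ 2 / 2) ≤ 1 :=
    Real.exp_le_one_iff.2 (by linarith [sq_nonneg (s / √v)])
  rw [potentialGain_zero_eq s (by linarith), mul_assoc _ (√(2 * Real.pi))⁻¹]
  refine mul_le_of_le_one_right (by positivity) (mul_le_one₀ inv_sqrt_two_pi_le_one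
    (by positivity) (mul_le_one₀ (mul_le_one₀ (rpow_neg_mem_Icc hκ hv).2 (by positivity)
      (inv_sqrt_le_one hv)) (by positivity) ?_))
  exact div_le_one_of_le₀ (hexp.trans hv) (by positivity)

theorem exists_pow_three_mul_rpow_le {p L m : ℝ} (hκ₀ : 0 < κ) (hκ₁ : κ ≤ 1)
    (hp : 2 * p ≤ 2 + 1 / κ) (hL : 0 ≤ L) (hm : 0 < m) :
    ∃ C, 0 ≤ C ∧ ∀ ξ w : ℝ, 0 ≤ ξ → ξ ≤ 1 → 0 < w →
      L * ξ ^ 3 * w ^ (1 - κ) ≤ C * ξ ^ (2 * p) + m * ξ ^ 2 * w := by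
  refine ⟨L * (L / m) ^ ((1 - κ) / κ), by positivity, fun ξ w hξ₀ hξ₁ hw ↦ ?_⟩
  rcases hξ₀.eq_or_lt with rfl | hξ
  · rw [zero_pow three_ne_zero, mul_zero, zero_mul]
    positivity
  rcases le_or_gt (L * ξ) (m * w ^ κ) with hle | hlt
  · calc L * ξ ^ 3 * w ^ (1 - κ) = ξ ^ 2 * w ^ (1 - κ) * (L * ξ) := by ring
      _ ≤ ξ ^ 2 * w ^ (1 - κ) * (m * w ^ κ) := by gcongr
      _ = m * ξ ^ 2 * (w ^ (1 - κ) * w ^ κ) := by ring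
      _ = m * ξ ^ 2 * w := by rw [← Real.rpow_add hw, sub_add_cancel, Real.rpow_one]
      _ ≤ L * (L / m) ^ ((1 - κ) / κ) * ξ ^ (2 * p) + m * ξ ^ 2 * w :=
          le_add_of_nonneg_left (by positivity)
  · have hw_le : w ^ (1 - κ) ≤ (L / m) ^ ((1 - κ) / κ) * ξ ^ ((1 - κ) / κ) := by
      have hexponent : w ^ (1 - κ) = (w ^ κ) ^ ((1 - κ) / κ) := by
        rw [← Real.rpow_mul hw.le, mul_div_cancel₀ (1 - κ) hκ₀.ne']
      rw [← Real.mul_rpow (by positivity) hξ₀, hexponent]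
      refine Real.rpow_le_rpow (by positivity) ?_ (div_nonneg (sub_nonneg.2 hκ₁) hκ₀.le)
      rw [div_mul_eq_mul_div, le_div_iff₀ hm]
      linarith
    have hξ_pow : ξ ^ 3 * ξ ^ ((1 - κ) / κ) ≤ ξ ^ (2 * p) := by
      rw [← Real.rpow_natCast, ← Real.rpow_add hξ]
      refine Real.rpow_le_rpow_of_exponent_ge hξ hξ₁ (hp.trans_eq ?_)
      push_cast
      field_simp
      ring
    calc L * ξ ^ 3 * w ^ (1 - κ)
        ≤ L * ξ ^ 3 * ((L / m) ^ ((1 - κ) / κ) * ξ ^ ((1 - κ) / κ)) := by gcongr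
      _ = L * (L / m) ^ ((1 - κ) / κ) * (ξ ^ 3 * ξ ^ ((1 - κ) / κ)) := by ring
      _ ≤ L * (L / m) ^ ((1 - κ) / κ) * ξ ^ (2 * p) := by gcongr
      _ ≤ _ := le_add_of_nonneg_right (by positivity)

theorem inv_sqrt_pow_three_mul_exp_eq {v : ℝ} (hv : 0 < v) (z : ℝ) :
    (√v)⁻¹ ^ 3 * Real.exp (-((1 - κ) * z ^ 2 / 2))
      = (Real.exp (-z ^ 2 / 2) / v) ^ (1 - κ) * (v ^ (-κ) * (√v)⁻¹) := by
  have hexp : Real.exp (-((1 - κ) * z ^ 2 / 2)) = Real.exp (-z ^ 2 / 2) ^ (1 - κ) := by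
    rw [← Real.exp_mul]
    congr 1
    ring
  have hcube : (√v)⁻¹ ^ 3 = v⁻¹ * (√v)⁻¹ := by rw [pow_succ, inv_pow, Real.sq_sqrt hv.le]
  have hpow : v⁻¹ = (v ^ (1 - κ))⁻¹ * v ^ (-κ) := by
    rw [← Real.rpow_neg hv.le, ← Real.rpow_add hv, ← Real.rpow_neg_one]
    congr 1
    ring
  rw [hcube, hexp, Real.div_rpow (Real.exp_pos _).le hv.le, hpow]
  ring

theorem exists_pow_three_mul_le_potentialGain {p L : ℝ} (hκ₀ : 0 < κ) (hκ₁ : κ ≤ 1) (hM : 0 < M)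
    (hp : 2 * p ≤ 2 + 1 / κ) (hL : 0 ≤ L) :
    ∃ C, 0 ≤ C ∧ ∀ s v ξ : ℝ, 1 ≤ v → 0 ≤ ξ → ξ ≤ 1 →
      L * ((√v)⁻¹ ^ 3 * Real.exp (-((1 - κ) * (s / √v) ^ 2 / 2))) * ξ ^ 3
        ≤ C * ξ ^ (2 * p) + ξ ^ 2 / 2 * potentialGain κ M 0 s v := by
  obtain ⟨C, hC, h⟩ := exists_pow_three_mul_rpow_le (m := M * κ * (√(2 * Real.pi))⁻¹ / 2)
    hκ₀ hκ₁ hp hL (by positivity)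
  refine ⟨C, hC, fun s v ξ hv hξ₀ hξ₁ ↦ ?_⟩
  have hv₀ : 0 < v := one_pos.trans_le hv
  rw [inv_sqrt_pow_three_mul_exp_eq hv₀, potentialGain_zero_eq s hv₀]
  set w := Real.exp (-(s / √v) ^ 2 / 2) / v
  set ω := v ^ (-κ) * (√v)⁻¹
  have hω₁ : ω ≤ 1 :=
    mul_le_one₀ (rpow_neg_mem_Icc hκ₀.le hv).2 (by positivity) (inv_sqrt_le_one hv)
  calc L * (w ^ (1 - κ) * ω) * ξ ^ 3
      = L * ξ ^ 3 * w ^ (1 - κ) * ω := by ring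
    _ ≤ (C * ξ ^ (2 * p) + M * κ * (√(2 * Real.pi))⁻¹ / 2 * ξ ^ 2 * w) * ω := by
        gcongr
        exact h ξ w hξ₀ hξ₁ (by positivity)
    _ = C * ξ ^ (2 * p) * ω + ξ ^ 2 / 2 * (M * κ * (√(2 * Real.pi))⁻¹ * (ω * w)) := by ring
    _ ≤ C * ξ ^ (2 * p) + ξ ^ 2 / 2 * (M * κ * (√(2 * Real.pi))⁻¹ * (ω * w)) := by
        gcongr ?_ + _
        exact mul_le_of_le_one_right (by positivity) hω₁

theorem sq_add_le_one_add_mul_sq (hκ : 0 < κ) (a b : ℝ) :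
    (a + b) ^ 2 ≤ (1 + κ) * a ^ 2 + (1 + 1 / κ) * b ^ 2 := by
  have hsq : 0 ≤ (κ * a - b) ^ 2 / κ := by positivity
  have hexpand : (κ * a - b) ^ 2 / κ = κ * a ^ 2 - 2 * a * b + 1 / κ * b ^ 2 := by
    field_simp
    ring
  linarith

theorem exists_abs_potentialDeriv_taylor_left_le (hκ₀ : 0 < κ) (hκ₁ : κ ≤ 1) (hM : 0 ≤ M) :
    ∃ L, 0 ≤ L ∧ ∀ s v x : ℝ, 1 ≤ v → |x| ≤ 1 →
      |potentialDeriv κ M 0 (s + x) v - (potentialDeriv κ M 0 s v + x * potentialDeriv κ M 1 s v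
          + x ^ 2 / 2 * potentialDeriv κ M 2 s v)|
        ≤ L * ((√v)⁻¹ ^ 3 * Real.exp (-((1 - κ) * (s / √v) ^ 2 / 2))) * |x| ^ 3 := by
  obtain ⟨L, hL, h⟩ := exists_abs_potentialDeriv_succ_le (M := M) 2 hκ₀ hκ₁ hM (1 + 1 / κ)
  refine ⟨L, hL, fun s v x hv hx ↦ ?_⟩
  have hnear : ∀ y ∈ Set.uIcc s (s + x),
      (s / √v) ^ 2 ≤ (1 + κ) * (y / √v) ^ 2 + (1 + 1 / κ) := fun y hy ↦ by
    have hdist : |(s - y) / √v| ≤ 1 := by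
      rw [abs_div, abs_of_nonneg (Real.sqrt_nonneg v), div_eq_mul_inv, abs_sub_comm]
      have : |y - s| ≤ |x| := by simpa using Set.abs_sub_left_of_mem_uIcc hy
      exact mul_le_one₀ (this.trans hx) (by positivity) (inv_sqrt_le_one hv)
    calc (s / √v) ^ 2 = (y / √v + (s - y) / √v) ^ 2 := by ring
      _ ≤ (1 + κ) * (y / √v) ^ 2 + (1 + 1 / κ) * ((s - y) / √v) ^ 2 :=
        sq_add_le_one_add_mul_sq hκ₀ _ _
      _ ≤ (1 + κ) * (y / √v) ^ 2 + (1 + 1 / κ) := by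
        gcongr
        exact mul_le_of_le_one_right (by positivity) ((sq_le_one_iff_abs_le_one _).2 hdist)
  have htaylor := taylor_remainder_le (f := fun j y ↦ potentialDeriv κ M j y v) 3
    (fun j _ y _ ↦ hasDerivAt_potentialDeriv_left j y v)
    (fun y hy ↦ h (s / √v) y v hv (hnear y hy))
  rw [add_sub_cancel_left] at htaylor
  have hsum : ∑ i ∈ range 3, potentialDeriv κ M i s v * x ^ i / i.factorial
      = potentialDeriv κ M 0 s v + x * potentialDeriv κ M 1 s v
        + x ^ 2 / 2 * potentialDeriv κ M 2 s v := by
    simp only [sum_range_succ, sum_range_zero, Nat.factorial]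
    push_cast
    ring
  rwa [hsum] at htaylor

theorem le_quadratic_add_rpow_of_one_lt_abs {p x a₀ a₀' a₁ a₂ C₀ C₁ C₂ : ℝ} (hp : 1 ≤ p)
    (hx : 1 < |x|) (ha₀ : |a₀| ≤ C₀) (ha₀' : |a₀'| ≤ C₀) (ha₁ : |a₁| ≤ C₁) (ha₂ : |a₂| ≤ C₂) :
    a₀' ≤ a₀ + x * a₁ + x ^ 2 / 2 * a₂ + (2 * C₀ + C₁ + C₂) * |x| ^ (2 * p) := by
  have hpow {r : ℝ} (hr : r ≤ 2 * p) : |x| ^ r ≤ |x| ^ (2 * p) :=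
    Real.rpow_le_rpow_of_exponent_le hx.le hr
  have hpow₀ : 1 ≤ |x| ^ (2 * p) := by simpa using hpow (r := 0) (by linarith)
  have hpow₁ : |x| ≤ |x| ^ (2 * p) := by simpa using hpow (r := 1) (by linarith)
  have hpow₂ : x ^ 2 ≤ |x| ^ (2 * p) := by
    simpa using hpow (r := (2 : ℕ)) (by push_cast; linarith)
  have hx₀ : C₀ ≤ C₀ * |x| ^ (2 * p) := le_mul_of_one_le_right ((abs_nonneg _).trans ha₀) hpow₀
  have hx₁ : |x * a₁| ≤ |x| ^ (2 * p) * C₁ := by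
    rw [abs_mul]
    exact mul_le_mul hpow₁ ha₁ (abs_nonneg _) (by positivity)
  have hx₂ : |x ^ 2 * a₂| ≤ |x| ^ (2 * p) * C₂ := by
    rw [abs_mul, abs_of_nonneg (sq_nonneg x)]
    exact mul_le_mul hpow₂ ha₂ (abs_nonneg _) (by positivity)
  linarith [abs_le.1 ha₀, abs_le.1 ha₀', abs_le.1 hx₁, abs_le.1 hx₂, abs_nonneg (x ^ 2 * a₂)]

theorem exists_potentialDeriv_add_left_le {p : ℝ} (hκ₀ : 0 < κ) (hκ₁ : κ ≤ 1) (hM : 0 < M)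
    (hp₁ : 1 ≤ p) (hp₂ : 2 * p ≤ 2 + 1 / κ) :
    ∃ C, 0 ≤ C ∧ ∀ s v x : ℝ, 1 ≤ v →
      potentialDeriv κ M 0 (s + x) v
        ≤ potentialDeriv κ M 0 s v + x * potentialDeriv κ M 1 s v
          + x ^ 2 / 2 * (potentialDeriv κ M 2 s v + potentialGain κ M 0 s v)
          + C * |x| ^ (2 * p) := by
  obtain ⟨C₀, hC₀, h₀⟩ := exists_abs_potentialDeriv_le (M := M) 0 hκ₀ hκ₁ hM.le
  obtain ⟨C₁, hC₁, h₁⟩ := exists_abs_potentialDeriv_le (M := M) 1 hκ₀ hκ₁ hM.le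
  obtain ⟨C₂, hC₂, h₂⟩ := exists_abs_potentialDeriv_le (M := M) 2 hκ₀ hκ₁ hM.le
  obtain ⟨L, hL, htaylor⟩ := exists_abs_potentialDeriv_taylor_left_le hκ₀ hκ₁ hM.le
  obtain ⟨C₃, hC₃, hgain⟩ := exists_pow_three_mul_le_potentialGain hκ₀ hκ₁ hM hp₂ hL
  refine ⟨C₃ + (2 * C₀ + C₁ + C₂), by positivity, fun s v x hv ↦ ?_⟩
  have hsmall : 0 ≤ C₃ * |x| ^ (2 * p) := by positivity
  have hlarge : 0 ≤ (2 * C₀ + C₁ + C₂) * |x| ^ (2 * p) := by positivity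
  rcases le_or_gt |x| 1 with hx | hx
  · have habsorb := hgain s v |x| hv (abs_nonneg x) hx
    rw [sq_abs] at habsorb
    linarith [(abs_le.1 (htaylor s v x hv hx)).2]
  · have hgain₀ : 0 ≤ x ^ 2 / 2 * potentialGain κ M 0 s v :=
      mul_nonneg (by positivity) (potentialGain_zero_nonneg hκ₀.le hM.le s (by linarith))
    linarith [le_quadratic_add_rpow_of_one_lt_abs hp₁ hx (h₀ s v hv) (h₀ (s + x) v hv)
      (h₁ s v hv) (h₂ s v hv)]

theorem hasDerivAt_deriv_potentialDeriv_right (s : ℝ) {v : ℝ} (hv : 0 < v) :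
    HasDerivAt (fun w ↦ potentialDeriv κ M 2 s w / 2 + potentialGain κ M 0 s w)
      (potentialDeriv κ M 4 s v / 4 + potentialGain κ M 2 s v
        + M * κ * (κ + 1) * (v ^ (-κ - 2) * normalTailDeriv 1 s v)) v :=
  (((hasDerivAt_potentialDeriv_right 2 s hv).div_const 2).add
    (hasDerivAt_potentialGain_right 0 s hv)).congr_deriv (by ring)

theorem exists_abs_potentialGain_le (j : ℕ) (hκ₀ : 0 < κ) (hκ₁ : κ ≤ 1) (hM : 0 ≤ M) (D : ℝ) :
    ∃ C, 0 ≤ C ∧ ∀ b s v : ℝ, 1 ≤ v → b ^ 2 ≤ (1 + κ) * (s / √v) ^ 2 + D →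
      |potentialGain κ M j s v|
        ≤ C * ((√v)⁻¹ ^ (j + 1) * Real.exp (-((1 - κ) * b ^ 2 / 2))) := by
  obtain ⟨C, hC, h⟩ := exists_abs_normalTailDeriv_succ_le j hκ₀ hκ₁ D
  refine ⟨M * κ * C, by positivity, fun b s v hv hb ↦ ?_⟩
  have hpow : v ^ (-κ - 1) ≤ 1 := Real.rpow_le_one_of_one_le_of_nonpos hv (by linarith)
  rw [potentialGain, abs_neg, abs_mul, abs_of_nonneg (by positivity), mul_assoc (M * κ) C]
  exact mul_le_mul (mul_le_of_le_one_right (by positivity) hpow) (h b s v hb)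
    (abs_nonneg _) (by positivity)

theorem exists_abs_deriv_two_potentialDeriv_right_le (hκ₀ : 0 < κ) (hκ₁ : κ ≤ 1) (hM : 0 ≤ M) :
    ∃ L, 0 ≤ L ∧ ∀ s v w : ℝ, 1 ≤ v → v ≤ w → w ≤ (1 + κ) * v →
      |potentialDeriv κ M 4 s w / 4 + potentialGain κ M 2 s w
          + M * κ * (κ + 1) * (w ^ (-κ - 2) * normalTailDeriv 1 s w)|
        ≤ L * ((√v)⁻¹ ^ 3 * Real.exp (-((1 - κ) * (s / √v) ^ 2 / 2))) := by
  obtain ⟨L₄, hL₄, h₄⟩ := exists_abs_potentialDeriv_succ_le (M := M) 3 hκ₀ hκ₁ hM 0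
  obtain ⟨L₃, hL₃, h₃⟩ := exists_abs_potentialGain_le (M := M) 2 hκ₀ hκ₁ hM 0
  obtain ⟨L₁, hL₁, h₁⟩ := exists_abs_normalTailDeriv_succ_le 0 hκ₀ hκ₁ 0
  refine ⟨L₄ / 4 + L₃ + M * κ * (κ + 1) * L₁, by positivity, fun s v w hv hvw hwv ↦ ?_⟩
  have hw : 1 ≤ w := hv.trans hvw
  have hv₀ : 0 < v := one_pos.trans_le hv
  have hw₀ : 0 < w := one_pos.trans_le hw
  have hb : (s / √v) ^ 2 ≤ (1 + κ) * (s / √w) ^ 2 + 0 := by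
    rw [add_zero, div_pow, div_pow, Real.sq_sqrt hv₀.le, Real.sq_sqrt hw₀.le,
      mul_div_assoc', div_le_div_iff₀ hv₀ hw₀]
    linarith [mul_le_mul_of_nonneg_left hwv (sq_nonneg s)]
  set E := Real.exp (-((1 - κ) * (s / √v) ^ 2 / 2))
  have h₄' : |potentialDeriv κ M 4 s w| ≤ L₄ * ((√w)⁻¹ ^ 3 * E) := by
    refine (h₄ _ s w hw hb).trans ?_
    gcongr L₄ * (?_ * E)
    exact pow_le_pow_of_le_one (by positivity) (inv_sqrt_le_one hw) (by norm_num)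
  have h₁' : |w ^ (-κ - 2) * normalTailDeriv 1 s w| ≤ L₁ * ((√w)⁻¹ ^ 3 * E) := by
    have hpow : w ^ (-κ - 2) ≤ (√w)⁻¹ ^ 2 := by
      rw [inv_pow, Real.sq_sqrt hw₀.le, ← Real.rpow_neg_one]
      exact Real.rpow_le_rpow_of_exponent_le hw (by linarith)
    rw [abs_mul, abs_of_nonneg (by positivity)]
    exact (mul_le_mul hpow (h₁ _ s w hb) (abs_nonneg _) (by positivity)).trans_eq (by ring)
  calc _ ≤ |potentialDeriv κ M 4 s w| / 4 + |potentialGain κ M 2 s w|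
          + M * κ * (κ + 1) * |w ^ (-κ - 2) * normalTailDeriv 1 s w| := by
        refine (abs_add_three _ _ _).trans_eq ?_
        rw [abs_div, abs_mul (M * κ * (κ + 1)), Nat.abs_ofNat,
          abs_of_nonneg (a := M * κ * (κ + 1)) (by positivity)]
    _ ≤ L₄ * ((√w)⁻¹ ^ 3 * E) / 4 + L₃ * ((√w)⁻¹ ^ 3 * E)
          + M * κ * (κ + 1) * (L₁ * ((√w)⁻¹ ^ 3 * E)) := by
        gcongr
        exact h₃ _ s w hw hb
    _ = (L₄ / 4 + L₃ + M * κ * (κ + 1) * L₁) * ((√w)⁻¹ ^ 3 * E) := by ring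
    _ ≤ (L₄ / 4 + L₃ + M * κ * (κ + 1) * L₁) * ((√v)⁻¹ ^ 3 * E) := by gcongr

theorem exists_abs_potentialDeriv_taylor_right_le (hκ₀ : 0 < κ) (hκ₁ : κ ≤ 1) (hM : 0 ≤ M) :
    ∃ L, 0 ≤ L ∧ ∀ s v q : ℝ, 1 / κ ≤ v → 0 ≤ q → q ≤ 1 →
      |potentialDeriv κ M 0 s (v + q) - (potentialDeriv κ M 0 s v
          + q * (potentialDeriv κ M 2 s v / 2 + potentialGain κ M 0 s v))|
        ≤ L * ((√v)⁻¹ ^ 3 * Real.exp (-((1 - κ) * (s / √v) ^ 2 / 2))) * q ^ 2 := by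
  obtain ⟨L, hL, h⟩ := exists_abs_deriv_two_potentialDeriv_right_le hκ₀ hκ₁ hM
  refine ⟨L, hL, fun s v q hv hq₀ hq₁ ↦ ?_⟩
  have hκv : 1 ≤ κ * v := by
    rwa [div_le_iff₀ hκ₀, mul_comm] at hv
  have hv₁ : 1 ≤ v := ((one_le_div hκ₀).2 hκ₁).trans hv
  let f : ℕ → ℝ → ℝ
    | 0, w => potentialDeriv κ M 0 s w
    | 1, w => potentialDeriv κ M 2 s w / 2 + potentialGain κ M 0 s w
    | _, w => potentialDeriv κ M 4 s w / 4 + potentialGain κ M 2 s w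
        + M * κ * (κ + 1) * (w ^ (-κ - 2) * normalTailDeriv 1 s w)
  have hderiv : ∀ i < 2, ∀ w ∈ Set.uIcc v (v + q), HasDerivAt (f i) (f (i + 1) w) w :=
    fun i hi w hw ↦ by
      rw [Set.uIcc_of_le (by linarith)] at hw
      have hw₀ : 0 < w := by linarith [hw.1]
      interval_cases i
      · exact hasDerivAt_potentialDeriv_right 0 s hw₀
      · exact hasDerivAt_deriv_potentialDeriv_right s hw₀
  have hbound : ∀ w ∈ Set.uIcc v (v + q),
      |f 2 w| ≤ L * ((√v)⁻¹ ^ 3 * Real.exp (-((1 - κ) * (s / √v) ^ 2 / 2))) := fun w hw ↦ by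
    rw [Set.uIcc_of_le (by linarith)] at hw
    exact h s v w hv₁ hw.1 (by linarith [hw.2])
  have htaylor := taylor_remainder_le 2 hderiv hbound
  rw [add_sub_cancel_left, abs_of_nonneg hq₀] at htaylor
  have hsum : ∑ i ∈ range 2, f i v * q ^ i / i.factorial = potentialDeriv κ M 0 s v
      + q * (potentialDeriv κ M 2 s v / 2 + potentialGain κ M 0 s v) := by
    simp [f, sum_range_succ, mul_comm]
  rwa [hsum] at htaylor

theorem exists_potentialDeriv_add_le_right {p : ℝ} (hκ₀ : 0 < κ) (hκ₁ : κ ≤ 1) (hM : 0 < M)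
    (hp₁ : 1 ≤ p) (hp₂ : 2 * p ≤ 2 + 1 / κ) :
    ∃ C, 0 ≤ C ∧ ∀ s v q : ℝ, 1 / κ ≤ v → 0 ≤ q →
      potentialDeriv κ M 0 s v
        ≤ potentialDeriv κ M 0 s (v + q)
          - q / 2 * (potentialDeriv κ M 2 s v + potentialGain κ M 0 s v) + C * q ^ p := by
  obtain ⟨C₀, hC₀, h₀⟩ := exists_abs_potentialDeriv_le (M := M) 0 hκ₀ hκ₁ hM.le
  obtain ⟨C₂, hC₂, h₂⟩ := exists_abs_potentialDeriv_le (M := M) 2 hκ₀ hκ₁ hM.le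
  obtain ⟨L, hL, htaylor⟩ := exists_abs_potentialDeriv_taylor_right_le hκ₀ hκ₁ hM.le
  obtain ⟨C₃, hC₃, hgain⟩ := exists_pow_three_mul_le_potentialGain hκ₀ hκ₁ hM hp₂ hL
  refine ⟨C₃ + (2 * C₀ + C₂ + M * κ), by positivity, fun s v q hv hq₀ ↦ ?_⟩
  have hv₁ : 1 ≤ v := ((one_le_div hκ₀).2 hκ₁).trans hv
  have hsmall : 0 ≤ C₃ * q ^ p := by positivity
  have hlarge : 0 ≤ (2 * C₀ + C₂ + M * κ) * q ^ p := by positivity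
  rcases le_or_gt q 1 with hq₁ | hq₁
  · have hsqrt : √q ^ (2 * p) = q ^ p := by
      rw [Real.rpow_mul (Real.sqrt_nonneg q), Real.rpow_two, Real.sq_sqrt hq₀]
    have hq : q ^ 2 ≤ √q ^ 3 := by
      calc q ^ 2 = √q ^ 4 := by rw [show 4 = 2 * 2 from rfl, pow_mul, Real.sq_sqrt hq₀]
        _ ≤ √q ^ 3 :=
          pow_le_pow_of_le_one (Real.sqrt_nonneg q) (Real.sqrt_le_one.2 hq₁) (by norm_num)
    have habsorb := hgain s v √q hv₁ (Real.sqrt_nonneg q) (Real.sqrt_le_one.2 hq₁)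
    rw [hsqrt, Real.sq_sqrt hq₀] at habsorb
    set R := L * ((√v)⁻¹ ^ 3 * Real.exp (-((1 - κ) * (s / √v) ^ 2 / 2)))
    have hR : R * q ^ 2 ≤ R * √q ^ 3 := by gcongr
    linarith [(abs_le.1 (htaylor s v q hv hq₀ hq₁)).1]
  · have hpow₀ : 1 ≤ q ^ p := Real.one_le_rpow hq₁.le (by linarith)
    have hpow₁ : q ≤ q ^ p := Real.self_le_rpow_of_one_le hq₁.le hp₁
    have hderiv : q / 2 * (potentialDeriv κ M 2 s v + potentialGain κ M 0 s v)
        ≤ q ^ p * (C₂ + M * κ) := by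
      have := (abs_le.1 (h₂ s v hv₁)).2
      have := potentialGain_zero_le hκ₀.le hM.le s hv₁
      have : 0 ≤ C₂ + M * κ := by positivity
      calc _ ≤ q / 2 * (C₂ + M * κ) := by gcongr
        _ ≤ q ^ p * (C₂ + M * κ) := by gcongr; linarith
    have hvalue : C₀ ≤ C₀ * q ^ p := le_mul_of_one_le_right hC₀ hpow₀
    linarith [(abs_le.1 (h₀ s v hv₁)).2, (abs_le.1 (h₀ s (v + q) (by linarith))).1]

/-- The function `f s v` of space and time, set to zero for times `v` below the threshold `a`. -/
noncomputable def cutoff (a : ℝ) (f : ℝ → ℝ → ℝ) (s v : ℝ) : ℝ :=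
  if a ≤ v then f s v else 0

theorem measurable_uncurry_cutoff {a : ℝ} {f : ℝ → ℝ → ℝ} (hf : Measurable f.uncurry) :
    Measurable (cutoff a f).uncurry :=
  Measurable.ite (measurableSet_le measurable_const measurable_snd) hf measurable_const

theorem abs_cutoff_le {a C : ℝ} {f : ℝ → ℝ → ℝ} (hC : 0 ≤ C) (hf : ∀ s v, a ≤ v → |f s v| ≤ C)
    (s v : ℝ) : |cutoff a f s v| ≤ C := by
  unfold cutoff
  split_ifs with h
  · exact hf s v h
  · simpa using hC

theorem exists_cutoff_potentialDeriv_step {p : ℝ} (hκ₀ : 0 < κ) (hκ₁ : κ ≤ 1) (hM : 0 < M)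
    (hp₁ : 1 ≤ p) (hp₂ : 2 * p ≤ 2 + 1 / κ) :
    ∃ C, 0 ≤ C ∧ ∀ s v x q : ℝ, 0 ≤ q →
      cutoff (1 / κ) (potentialDeriv κ M 0) (s + x) v
        ≤ cutoff (1 / κ) (potentialDeriv κ M 0) s (v + q)
          + (x * cutoff (1 / κ) (potentialDeriv κ M 1) s v
            + (x ^ 2 - q) * cutoff (1 / κ)
              (fun s v ↦ (potentialDeriv κ M 2 s v + potentialGain κ M 0 s v) / 2) s v
            + C * (|x| ^ (2 * p) + q ^ p)) := by
  obtain ⟨C₁, hC₁, h₁⟩ := exists_potentialDeriv_add_left_le hκ₀ hκ₁ hM hp₁ hp₂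
  obtain ⟨C₂, hC₂, h₂⟩ := exists_potentialDeriv_add_le_right hκ₀ hκ₁ hM hp₁ hp₂
  have hκ : 1 ≤ 1 / κ := (one_le_div hκ₀).2 hκ₁
  refine ⟨C₁ + C₂, by positivity, fun s v x q hq ↦ ?_⟩
  have hx : 0 ≤ |x| ^ (2 * p) := by positivity
  have hqp : 0 ≤ q ^ p := by positivity
  by_cases hv : 1 / κ ≤ v
  · simp only [cutoff, if_pos hv, if_pos (hv.trans (le_add_of_nonneg_right hq))]
    linarith [h₁ s v x (hκ.trans hv), h₂ s v q hv hq, mul_nonneg hC₁ hqp, mul_nonneg hC₂ hx]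
  · simp only [cutoff, if_neg hv, mul_zero, zero_add]
    have hrem : 0 ≤ (C₁ + C₂) * (|x| ^ (2 * p) + q ^ p) := by positivity
    split_ifs with hvq
    · exact add_nonneg (potentialDeriv_zero_nonneg hκ₀.le hM.le s (hκ.trans hvq)) hrem
    · simpa using hrem

theorem cutoff_potentialDeriv_zero_nonneg (hκ₀ : 0 < κ) (hκ₁ : κ ≤ 1) (hM : 0 ≤ M) (s v : ℝ) :
    0 ≤ cutoff (1 / κ) (potentialDeriv κ M 0) s v := by
  unfold cutoff
  split_ifs with hv
  · exact potentialDeriv_zero_nonneg hκ₀.le hM s (((one_le_div hκ₀).2 hκ₁).trans hv)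
  · rfl

theorem potentialDeriv_zero_eq (s v : ℝ) :
    potentialDeriv κ M 0 s v
      = stdNormalCDF (-(s / √v)) + M * (2 - v ^ (-κ)) * ((√v)⁻¹ * φ (s / √v)) := by
  simp [potentialDeriv, normalTailDeriv]

theorem potentialDeriv_zero_le (hM : 0 ≤ M) (s : ℝ) {v : ℝ} (hv : 0 ≤ v) :
    potentialDeriv κ M 0 s v ≤ stdNormalCDF (-(s / √v)) + 2 * M * (√v)⁻¹ := by
  have hφ : φ (s / √v) ≤ 1 := by
    rw [gaussianPDFReal_zero_one]
    exact mul_le_one₀ inv_sqrt_two_pi_le_one (by positivity)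
      (Real.exp_le_one_iff.2 (by linarith [sq_nonneg (s / √v)]))
  rw [potentialDeriv_zero_eq, mul_comm 2 M]
  gcongr
  · exact mul_nonneg (by positivity) (gaussianPDFReal_nonneg 0 1 _)
  · linarith [Real.rpow_nonneg hv (-κ)]
  · exact mul_le_of_le_one_right (by positivity) hφ

theorem one_le_potentialDeriv_zero (hκ : 0 ≤ κ) (hM : 0 ≤ M) {s v : ℝ} (hs : s ≤ 0) (hv₁ : 1 ≤ v)
    (hv : √(2 * Real.pi) * √v ≤ M) : 1 ≤ potentialDeriv κ M 0 s v := by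
  have hv₀ : 0 < √v := Real.sqrt_pos.2 (by linarith)
  have htail : 1 - Real.exp (-(s / √v) ^ 2 / 2) ≤ stdNormalCDF (-(s / √v)) := by
    simpa using one_sub_exp_le_stdNormalCDF (z := -(s / √v))
      (neg_nonneg.2 (div_nonpos_of_nonpos_of_nonneg hs hv₀.le))
  have hφ : Real.exp (-(s / √v) ^ 2 / 2) ≤ M * ((√v)⁻¹ * φ (s / √v)) := by
    rw [gaussianPDFReal_zero_one]
    calc Real.exp (-(s / √v) ^ 2 / 2)
        = √(2 * Real.pi) * √v * ((√v)⁻¹ * ((√(2 * Real.pi))⁻¹ * Real.exp (-(s / √v) ^ 2 / 2))) := by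
          field_simp
      _ ≤ _ := by gcongr
  have hweight : M * ((√v)⁻¹ * φ (s / √v)) ≤ M * (2 - v ^ (-κ)) * ((√v)⁻¹ * φ (s / √v)) := by
    have := gaussianPDFReal_nonneg 0 1 (s / √v)
    gcongr
    exact le_mul_of_one_le_right hM (by linarith [(rpow_neg_mem_Icc hκ hv₁).2])
  rw [potentialDeriv_zero_eq]
  linarith

theorem measurable_uncurry_normalTailDeriv (j : ℕ) : Measurable (normalTailDeriv j).uncurry := by
  have hz : Measurable fun x : ℝ × ℝ ↦ x.1 / √x.2 := by fun_prop
  cases j with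
  | zero =>
    have hcdf : Continuous stdNormalCDF :=
      continuous_iff_continuousAt.2 fun x ↦ (hasDerivAt_stdNormalCDF x).continuousAt
    exact hcdf.measurable.comp hz.neg
  | succ j =>
    have hhermite : Measurable fun z : ℝ ↦ Polynomial.aeval z (Polynomial.hermite j) :=
      (Polynomial.continuous_aeval _).measurable
    exact ((measurable_snd.sqrt.inv.neg).pow_const _).mul
      ((hhermite.comp hz).mul ((measurable_gaussianPDFReal 0 1).comp hz))

theorem measurable_uncurry_potentialDeriv (j : ℕ) : Measurable (potentialDeriv κ M j).uncurry :=
  (measurable_uncurry_normalTailDeriv j).sub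
    (((measurable_snd.pow_const _).const_sub 2 |>.const_mul M).mul
      (measurable_uncurry_normalTailDeriv (j + 1)))

theorem measurable_uncurry_potentialGain (j : ℕ) : Measurable (potentialGain κ M j).uncurry :=
  (((measurable_snd.pow_const _).const_mul (M * κ)).mul
    (measurable_uncurry_normalTailDeriv (j + 1))).neg

end Potential

section TruncExp

/-- The exponential `u ↦ e^{l u}` capped at `1`. Its increments along `⟨S⟩ - [S]` give a lower-tail
bound for the squared variation that needs no bound on the jumps. -/
noncomputable def truncExp (l u : ℝ) : ℝ :=
  min (Real.exp (l * u)) 1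

/-- The coefficient of `x² - q` in the one-step bound for `truncExp l`, where `x` is a martingale
difference and `q` its conditional variance; `e` is the loss in the drift. It is set to `0` where
the cap is active or `q` is so large that the error term `q ^ p` alone is enough. -/
noncomputable def truncExpDrift (l e u q : ℝ) : ℝ :=
  if u < 0 ∧ l * q ≤ 1 then -(l * (1 - e) * Real.exp (l * u)) else 0

theorem truncExp_nonneg (l u : ℝ) : 0 ≤ truncExp l u :=
  le_min (Real.exp_pos _).le zero_le_one

theorem truncExp_le_one (l u : ℝ) : truncExp l u ≤ 1 :=
  min_le_right _ _

theorem truncExp_of_nonneg {l u : ℝ} (hl : 0 ≤ l) (hu : 0 ≤ u) : truncExp l u = 1 :=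
  min_eq_right (Real.one_le_exp (mul_nonneg hl hu))

theorem measurable_truncExp (l : ℝ) : Measurable (truncExp l) := by
  unfold truncExp
  fun_prop

theorem measurable_uncurry_truncExpDrift (l e : ℝ) : Measurable (truncExpDrift l e).uncurry := by
  have hset : MeasurableSet {x : ℝ × ℝ | x.1 < 0 ∧ l * x.2 ≤ 1} :=
    (measurableSet_lt measurable_fst measurable_const).inter
      (measurableSet_le (measurable_snd.const_mul l) measurable_const)
  exact Measurable.ite hset (by fun_prop) measurable_const

theorem abs_truncExpDrift_le_one {l e : ℝ} (hl₀ : 0 ≤ l) (hl₁ : l ≤ 1) (he₀ : 0 ≤ e) (he₁ : e ≤ 1)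
    (u q : ℝ) : |truncExpDrift l e u q| ≤ 1 := by
  unfold truncExpDrift
  split_ifs with h
  · have hexp : Real.exp (l * u) ≤ 1 :=
      Real.exp_le_one_iff.2 (mul_nonpos_of_nonneg_of_nonpos hl₀ h.1.le)
    have h₁ : 0 ≤ 1 - e := sub_nonneg.2 he₁
    rw [abs_neg, abs_of_nonneg (by positivity)]
    exact mul_le_one₀ (mul_le_one₀ hl₁ h₁ (by linarith)) (Real.exp_pos _).le hexp
  · simp

theorem exp_le_one_add_add_min_sq {a b t : ℝ} (ha : 0 ≤ a) (hb₀ : 0 ≤ b) (hb₁ : b ≤ 1)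
    (hat : -a ≤ t) (htb : t ≤ b) :
    Real.exp t ≤ 1 + t + min (a ^ 2) a + min (b ^ 2) b := by
  have hma : 0 ≤ min (a ^ 2) a := le_min (by positivity) ha
  have hmb : 0 ≤ min (b ^ 2) b := le_min (by positivity) hb₀
  rcases le_total (-1) t with ht | ht
  · have hexp : Real.exp t ≤ 1 + t + t ^ 2 := by
      linarith [(abs_le.1 (Real.abs_exp_sub_one_sub_id_le (abs_le.2 ⟨ht, htb.trans hb₁⟩))).2]
    rcases le_total 0 t with ht₀ | ht₀
    · have : t ^ 2 ≤ min (b ^ 2) b := le_min (by nlinarith) (by nlinarith)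
      linarith
    · have : t ^ 2 ≤ min (a ^ 2) a := le_min (by nlinarith) (by nlinarith)
      linarith
  · have hexp : Real.exp t ≤ 1 := Real.exp_le_one_iff.2 (by linarith)
    have : -t ≤ min (a ^ 2) a := le_min (by nlinarith) (by linarith)
    linarith

theorem min_sq_rpow_mul_le {p a y : ℝ} (hp : 1 ≤ p) (ha : 0 < a) (hy : 0 ≤ y) :
    min ((a ^ (p - 1) * y) ^ 2) (a ^ (p - 1) * y) ≤ a ^ p * (a ^ (p - 1) * y) + y ^ p := by
  have hmul {z : ℝ} (hz : 0 < z) : z ^ p = z ^ (p - 1) * z := by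
    rw [Real.rpow_sub_one hz.ne', div_mul_cancel₀ _ hz.ne']
  rcases le_total y a with hya | hay
  · have hyp : 0 ≤ y ^ p := by positivity
    calc min ((a ^ (p - 1) * y) ^ 2) (a ^ (p - 1) * y)
        ≤ a ^ (p - 1) * y * (a ^ (p - 1) * y) := (min_le_left _ _).trans_eq (sq _)
      _ ≤ a ^ (p - 1) * a * (a ^ (p - 1) * y) := by gcongr
      _ ≤ a ^ p * (a ^ (p - 1) * y) + y ^ p := by rw [hmul ha]; linarith
  · calc min ((a ^ (p - 1) * y) ^ 2) (a ^ (p - 1) * y)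
        ≤ a ^ (p - 1) * y := min_le_right _ _
      _ ≤ y ^ (p - 1) * y := by gcongr
      _ = y ^ p := (hmul (ha.trans_le hay)).symm
      _ ≤ a ^ p * (a ^ (p - 1) * y) + y ^ p := le_add_of_nonneg_left (by positivity)

theorem sq_rpow (x p : ℝ) : (x ^ 2) ^ p = |x| ^ (2 * p) := by
  rw [← sq_abs, ← Real.rpow_natCast, ← Real.rpow_mul (abs_nonneg x), Nat.cast_ofNat]

theorem exp_neg_sq_add_le {p a x q : ℝ} (hp : 1 ≤ p) (ha : 0 < a) (hap : a ^ p ≤ 1 / 2)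
    (hq₀ : 0 ≤ q) (hq₁ : a ^ (p - 1) * q ≤ 1) :
    Real.exp (a ^ (p - 1) * (-x ^ 2 + (1 - 2 * a ^ p) * q))
      ≤ 1 - a ^ (p - 1) * (1 - a ^ p) * (x ^ 2 - q) + (|x| ^ (2 * p) + q ^ p) := by
  have hx := min_sq_rpow_mul_le hp ha (sq_nonneg x)
  have hq := min_sq_rpow_mul_le hp ha hq₀
  rw [sq_rpow] at hx
  set l := a ^ (p - 1)
  set e := a ^ p
  have he : 0 < e := by positivity
  have hlx : 0 ≤ l * x ^ 2 := by positivity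
  have hlq : 0 ≤ l * q := by positivity
  have := exp_le_one_add_add_min_sq (t := l * (-x ^ 2 + (1 - 2 * e) * q)) hlx hlq hq₁
    (by nlinarith) (by nlinarith)
  linarith

theorem truncExp_step {p a : ℝ} (hp : 1 ≤ p) (ha₀ : 0 < a) (ha₁ : a ≤ 1) (hap : a ^ p ≤ 1 / 2)
    (u x : ℝ) {q : ℝ} (hq : 0 ≤ q) :
    truncExp (a ^ (p - 1)) (u - x ^ 2 + (1 - 2 * a ^ p) * q)
      ≤ truncExp (a ^ (p - 1)) u
        + ((x ^ 2 - q) * truncExpDrift (a ^ (p - 1)) (a ^ p) u q + (|x| ^ (2 * p) + q ^ p)) := by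
  have hl₀ : 0 < a ^ (p - 1) := by positivity
  have hl₁ : a ^ (p - 1) ≤ 1 := Real.rpow_le_one ha₀.le ha₁ (by linarith)
  have hx : 0 ≤ |x| ^ (2 * p) := by positivity
  have hqp : 0 ≤ q ^ p := by positivity
  have hcap := truncExp_le_one (a ^ (p - 1)) (u - x ^ 2 + (1 - 2 * a ^ p) * q)
  rcases le_or_gt 0 u with hu | hu
  · rw [truncExpDrift, if_neg fun h ↦ h.1.not_ge hu, truncExp_of_nonneg hl₀.le hu]
    linarith
  rcases lt_or_ge 1 (a ^ (p - 1) * q) with hlq | hlq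
  · have hq₁ : 1 ≤ q ^ p := Real.one_le_rpow (by nlinarith) (by linarith)
    rw [truncExpDrift, if_neg fun h ↦ h.2.not_gt hlq]
    linarith [truncExp_nonneg (a ^ (p - 1)) u]
  have hY : Real.exp (a ^ (p - 1) * u) ≤ 1 :=
    Real.exp_le_one_iff.2 (mul_nonpos_of_nonneg_of_nonpos hl₀.le hu.le)
  have hstep := exp_neg_sq_add_le (x := x) hp ha₀ hap hq hlq
  rw [truncExpDrift, if_pos ⟨hu, hlq⟩, truncExp, truncExp, min_eq_left hY]
  set Y := Real.exp (a ^ (p - 1) * u)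
  calc min (Real.exp (a ^ (p - 1) * (u - x ^ 2 + (1 - 2 * a ^ p) * q))) 1
      ≤ Y * Real.exp (a ^ (p - 1) * (-x ^ 2 + (1 - 2 * a ^ p) * q)) := by
        refine (min_le_left _ _).trans_eq ?_
        rw [← Real.exp_add]
        ring_nf
    _ ≤ Y * (1 - a ^ (p - 1) * (1 - a ^ p) * (x ^ 2 - q) + (|x| ^ (2 * p) + q ^ p)) := by gcongr
    _ ≤ Y + ((x ^ 2 - q) * -(a ^ (p - 1) * (1 - a ^ p) * Y) + (|x| ^ (2 * p) + q ^ p)) := by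
        linarith [mul_le_of_le_one_left (add_nonneg hx hqp) hY]

theorem exists_exp_neg_inv_le_rpow (p : ℝ) :
    ∃ C : ℝ, 0 ≤ C ∧ ∀ a : ℝ, 0 < a → a ≤ 1 → Real.exp (-a⁻¹) ≤ C * a ^ p := by
  obtain ⟨m, hm⟩ := exists_nat_ge p
  refine ⟨m.factorial, by positivity, fun a ha₀ ha₁ ↦ ?_⟩
  calc Real.exp (-a⁻¹) = (Real.exp a⁻¹)⁻¹ := Real.exp_neg _
    _ ≤ (a⁻¹ ^ m / m.factorial)⁻¹ := by
      gcongr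
      exact Real.pow_div_factorial_le_exp _ (by positivity) m
    _ = m.factorial * a ^ (m : ℝ) := by rw [inv_div, inv_pow, Real.rpow_natCast]; field_simp
    _ ≤ m.factorial * a ^ p := by
      gcongr m.factorial * ?_
      exact Real.rpow_le_rpow_of_exponent_ge ha₀ ha₁ hm

theorem truncExp_rpow_le {p a u : ℝ} (ha : 0 < a) (hu : u ≤ -(a ^ p)⁻¹) :
    truncExp (a ^ (p - 1)) u ≤ Real.exp (-a⁻¹) := by
  refine (min_le_left _ _).trans (Real.exp_le_exp.2 ?_)
  calc a ^ (p - 1) * u ≤ a ^ (p - 1) * -(a ^ p)⁻¹ := by gcongr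
    _ = -a⁻¹ := by rw [Real.rpow_sub_one ha.ne']; field_simp

end TruncExp

section MartingaleDifference

variable {Ω : Type*} {mΩ : MeasurableSpace Ω} {μ : Measure Ω}

/-- The partial sum `S_k = X_1 + ⋯ + X_k`; the term `X_0` is not included. -/
def partialSum (X : ℕ → Ω → ℝ) (k : ℕ) (ω : Ω) : ℝ :=
  ∑ i ∈ Icc 1 k, X i ω

/-- The squared variation `[S]_k` of the partial sums of `X`. -/
def squaredVariation (X : ℕ → Ω → ℝ) : ℕ → Ω → ℝ :=
  partialSum fun i ω ↦ X i ω ^ 2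

/-- The conditional variance `⟨S⟩_k` of the partial sums of `X`, built from Mathlib's versions of
the conditional expectations (so its increments are nonnegative only almost everywhere). -/
noncomputable def predictableVariation (μ : Measure Ω) (ℱ : Filtration ℕ mΩ) (X : ℕ → Ω → ℝ) :
    ℕ → Ω → ℝ :=
  partialSum fun i ↦ μ[fun ω ↦ X i ω ^ 2 | ℱ (i - 1)]

/-- `X 1, …, X n` are martingale differences for the filtration `ℱ`. -/
structure IsMartingaleDifference (X : ℕ → Ω → ℝ) (ℱ : Filtration ℕ mΩ) (μ : Measure Ω) (n : ℕ) :
    Prop where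
  stronglyMeasurable : ∀ i ∈ Icc 1 n, StronglyMeasurable[ℱ i] (X i)
  integrable : ∀ i ∈ Icc 1 n, Integrable (X i) μ
  condExp_eq_zero : ∀ i ∈ Icc 1 n, μ[X i | ℱ (i - 1)] =ᵐ[μ] 0

theorem integral_mul_eq_zero_of_condExp_eq_zero {m : MeasurableSpace Ω} (hm : m ≤ mΩ)
    [SigmaFinite (μ.trim hm)] {D E : Ω → ℝ} (hD : Integrable D μ) (hD₀ : μ[D | m] =ᵐ[μ] 0)
    (hE : StronglyMeasurable[m] E) (hDE : Integrable (D * E) μ) : ∫ ω, D ω * E ω ∂μ = 0 := by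
  have hcond : μ[D * E | m] =ᵐ[μ] 0 := by
    filter_upwards [condExp_mul_of_stronglyMeasurable_right hE hDE hD, hD₀] with ω h₁ h₂
    simp [h₁, h₂]
  calc ∫ ω, D ω * E ω ∂μ = ∫ ω, (μ[D * E | m]) ω ∂μ := (integral_condExp hm).symm
    _ = 0 := by simp [integral_congr_ae hcond]

theorem condExp_sub_condExp_self {m : MeasurableSpace Ω} (hm : m ≤ mΩ) [SigmaFinite (μ.trim hm)]
    {f : Ω → ℝ} (hf : Integrable f μ) : μ[f - μ[f | m] | m] =ᵐ[μ] 0 := by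
  filter_upwards [condExp_sub hf (integrable_condExp (m := m) (f := f)) m] with ω hω
  rw [hω, condExp_of_stronglyMeasurable hm stronglyMeasurable_condExp integrable_condExp, sub_self]

theorem memLp_sq_of_integrable_abs_rpow {X : Ω → ℝ} {p : ℝ} (hp : 0 < p)
    (hX : AEStronglyMeasurable X μ) (hXp : Integrable (fun ω ↦ |X ω| ^ (2 * p)) μ) :
    MemLp (fun ω ↦ X ω ^ 2) (ENNReal.ofReal p) μ := by
  rw [← integrable_norm_rpow_iff (by fun_prop) (ENNReal.ofReal_pos.2 hp).ne' ENNReal.ofReal_ne_top,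
    ENNReal.toReal_ofReal hp.le]
  simpa only [Real.norm_eq_abs, abs_sq, sq_rpow] using hXp

theorem condExp_sq_nonneg (X : Ω → ℝ) (m : MeasurableSpace Ω) :
    0 ≤ᵐ[μ] μ[fun ω ↦ X ω ^ 2 | m] :=
  condExp_nonneg (ae_of_all _ fun ω ↦ sq_nonneg (X ω))

theorem integrable_condExp_sq_rpow {X : Ω → ℝ} {m : MeasurableSpace Ω} {p : ℝ} (hp : 1 ≤ p)
    (hX : AEStronglyMeasurable[mΩ] X μ) (hXp : Integrable (fun ω ↦ |X ω| ^ (2 * p)) μ) :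
    Integrable (fun ω ↦ (μ[fun ω ↦ X ω ^ 2 | m]) ω ^ p) μ := by
  have hp₀ : 0 < p := by linarith
  have hmem := (memLp_sq_of_integrable_abs_rpow hp₀ hX hXp).condExp (m := m)
    (ENNReal.one_le_ofReal.2 hp)
  have hint := hmem.integrable_norm_rpow (ENNReal.ofReal_pos.2 hp₀).ne' ENNReal.ofReal_ne_top
  rw [ENNReal.toReal_ofReal hp₀.le] at hint
  refine hint.congr ?_
  filter_upwards [condExp_sq_nonneg X m] with ω hω
  rw [Real.norm_of_nonneg hω]

theorem integral_condExp_sq_rpow_le {X : Ω → ℝ} {m : MeasurableSpace Ω} {p : ℝ} (hp : 1 ≤ p)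
    (hXp : Integrable (fun ω ↦ |X ω| ^ (2 * p)) μ) :
    ∫ ω, (μ[fun ω ↦ X ω ^ 2 | m]) ω ^ p ∂μ ≤ ∫ ω, |X ω| ^ (2 * p) ∂μ := by
  have hnorm (ω : Ω) : ‖X ω ^ 2‖ ^ p = |X ω| ^ (2 * p) := by
    rw [Real.norm_of_nonneg (sq_nonneg _), sq_rpow]
  have habs : ∫ ω, (μ[fun ω ↦ X ω ^ 2 | m]) ω ^ p ∂μ
      = ∫ ω, ‖(μ[fun ω ↦ X ω ^ 2 | m]) ω‖ ^ p ∂μ := by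
    refine integral_congr_ae ?_
    filter_upwards [condExp_sq_nonneg X m] with ω hω
    rw [Real.norm_of_nonneg hω]
  simp only [habs, ← hnorm] at hXp ⊢
  exact integral_norm_condExp_rpow_le hp hXp

theorem integral_le_add_of_martingale_step {m : MeasurableSpace Ω} (hm : m ≤ mΩ)
    [IsFiniteMeasure μ] {X A B G H : Ω → ℝ} {p C a b : ℝ} (hp : 1 ≤ p) (hC : 0 ≤ C)
    (hX : Integrable X μ) (hX₀ : μ[X | m] =ᵐ[μ] 0)
    (hXp : Integrable (fun ω ↦ |X ω| ^ (2 * p)) μ) (hA : Measurable[m] A) (hAa : ∀ ω, |A ω| ≤ a)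
    (hB : Measurable[m] B) (hBb : ∀ ω, |B ω| ≤ b) (hG : Integrable G μ) (hH : Integrable H μ)
    (hstep : ∀ᵐ ω ∂μ, H ω ≤ G ω + (X ω * A ω + (X ω ^ 2 - (μ[fun ω ↦ X ω ^ 2 | m]) ω) * B ω
      + C * (|X ω| ^ (2 * p) + (μ[fun ω ↦ X ω ^ 2 | m]) ω ^ p))) :
    ∫ ω, H ω ∂μ ≤ ∫ ω, G ω ∂μ + 2 * C * ∫ ω, |X ω| ^ (2 * p) ∂μ := by
  set q := μ[fun ω ↦ X ω ^ 2 | m]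
  have hq : Integrable q μ := integrable_condExp
  have hX₂ : Integrable (fun ω ↦ X ω ^ 2) μ :=
    (memLp_sq_of_integrable_abs_rpow (by linarith) hX.1 hXp).integrable
      (ENNReal.one_le_ofReal.2 hp)
  have hD : Integrable (fun ω ↦ X ω ^ 2 - q ω) μ := hX₂.sub hq
  have hD₀ : μ[fun ω ↦ X ω ^ 2 - q ω | m] =ᵐ[μ] 0 := condExp_sub_condExp_self hm hX₂
  have hXA : Integrable (fun ω ↦ X ω * A ω) μ :=
    hX.mul_bdd (c := a) (hA.mono hm le_rfl).aestronglyMeasurable (ae_of_all _ hAa)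
  have hDB : Integrable (fun ω ↦ (X ω ^ 2 - q ω) * B ω) μ :=
    hD.mul_bdd (c := b) (hB.mono hm le_rfl).aestronglyMeasurable (ae_of_all _ hBb)
  have hqp : Integrable (fun ω ↦ q ω ^ p) μ := integrable_condExp_sq_rpow hp hX.1 hXp
  have hrem : Integrable (fun ω ↦ C * (|X ω| ^ (2 * p) + q ω ^ p)) μ := (hXp.add hqp).const_mul C
  have hXD : Integrable (fun ω ↦ X ω * A ω + (X ω ^ 2 - q ω) * B ω) μ := hXA.add hDB
  have hstep_int : Integrable (fun ω ↦ X ω * A ω + (X ω ^ 2 - q ω) * B ω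
      + C * (|X ω| ^ (2 * p) + q ω ^ p)) μ := hXD.add hrem
  calc ∫ ω, H ω ∂μ
      ≤ ∫ ω, G ω + (X ω * A ω + (X ω ^ 2 - q ω) * B ω + C * (|X ω| ^ (2 * p) + q ω ^ p)) ∂μ :=
        integral_mono_ae hH (hG.add hstep_int) hstep
    _ = ∫ ω, G ω ∂μ + (∫ ω, X ω * A ω ∂μ + ∫ ω, (X ω ^ 2 - q ω) * B ω ∂μ
        + C * (∫ ω, |X ω| ^ (2 * p) ∂μ + ∫ ω, q ω ^ p ∂μ)) := by
        rw [integral_add hG hstep_int, integral_add hXD hrem, integral_add hXA hDB,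
          integral_const_mul, integral_add hXp hqp]
    _ = ∫ ω, G ω ∂μ + C * (∫ ω, |X ω| ^ (2 * p) ∂μ + ∫ ω, q ω ^ p ∂μ) := by
        rw [integral_mul_eq_zero_of_condExp_eq_zero hm hX hX₀ hA.stronglyMeasurable hXA,
          integral_mul_eq_zero_of_condExp_eq_zero hm hD hD₀ hB.stronglyMeasurable hDB]
        ring
    _ ≤ ∫ ω, G ω ∂μ + 2 * C * ∫ ω, |X ω| ^ (2 * p) ∂μ := by
        linarith [mul_le_mul_of_nonneg_left (integral_condExp_sq_rpow_le (m := m) hp hXp) hC]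

variable {ℱ : Filtration ℕ mΩ} {n : ℕ} {X : ℕ → Ω → ℝ}

theorem partialSum_zero (X : ℕ → Ω → ℝ) (ω : Ω) : partialSum X 0 ω = 0 := by
  simp [partialSum]

theorem partialSum_succ (X : ℕ → Ω → ℝ) (k : ℕ) (ω : Ω) :
    partialSum X (k + 1) ω = partialSum X k ω + X (k + 1) ω :=
  sum_Icc_succ_top (by omega) _

theorem measurable_partialSum {m : MeasurableSpace Ω} {X : ℕ → Ω → ℝ} {k : ℕ}
    (hX : ∀ i ∈ Icc 1 k, Measurable[m] (X i)) : Measurable[m] (partialSum X k) :=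
  Finset.measurable_fun_sum _ hX

theorem predictableVariation_succ (μ : Measure Ω) (ℱ : Filtration ℕ mΩ) (X : ℕ → Ω → ℝ) (i : ℕ)
    (ω : Ω) :
    predictableVariation μ ℱ X (i + 1) ω
      = predictableVariation μ ℱ X i ω + (μ[fun ω ↦ X (i + 1) ω ^ 2 | ℱ i]) ω :=
  partialSum_succ _ i ω

theorem squaredVariation_succ (X : ℕ → Ω → ℝ) (i : ℕ) (ω : Ω) :
    squaredVariation X (i + 1) ω = squaredVariation X i ω + X (i + 1) ω ^ 2 :=
  partialSum_succ _ i ω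

theorem measurable_predictableVariation (μ : Measure Ω) (X : ℕ → Ω → ℝ) {i k : ℕ}
    (hk : k ≤ i + 1) : Measurable[ℱ i] (predictableVariation μ ℱ X k) :=
  measurable_partialSum fun j hj ↦
    (stronglyMeasurable_condExp.mono (ℱ.mono (by grind))).measurable

theorem integrable_abs_predictableVariation_sub_rpow [IsFiniteMeasure μ] {p : ℝ} (hp : 1 ≤ p)
    (hX : ∀ i ∈ Icc 1 n, AEStronglyMeasurable (X i) μ)
    (hXp : ∀ i ∈ Icc 1 n, Integrable (fun ω ↦ |X i ω| ^ (2 * p)) μ) (b : ℝ) :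
    Integrable (fun ω ↦ |predictableVariation μ ℱ X n ω - b| ^ p) μ := by
  have hp₀ : 0 < p := by linarith
  have hT : MemLp (predictableVariation μ ℱ X n) (ENNReal.ofReal p) μ :=
    memLp_finsetSum (Icc 1 n) (f := fun i ↦ μ[fun ω ↦ X i ω ^ 2 | ℱ (i - 1)]) fun i hi ↦
      (memLp_sq_of_integrable_abs_rpow hp₀ (hX i hi) (hXp i hi)).condExp
        (ENNReal.one_le_ofReal.2 hp)
  have hint := (hT.sub (memLp_const b)).integrable_norm_rpow (ENNReal.ofReal_pos.2 hp₀).ne'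
    ENNReal.ofReal_ne_top
  rwa [ENNReal.toReal_ofReal hp₀.le] at hint

namespace IsMartingaleDifference

theorem integral_le_add_sum_of_step [IsFiniteMeasure μ] (h : IsMartingaleDifference X ℱ μ n)
    {A B H : ℕ → Ω → ℝ} {p C a b : ℝ} (hp : 1 ≤ p) (hC : 0 ≤ C)
    (hXp : ∀ i ∈ Icc 1 n, Integrable (fun ω ↦ |X i ω| ^ (2 * p)) μ)
    (hA : ∀ i < n, Measurable[ℱ i] (A i)) (hAa : ∀ i ω, |A i ω| ≤ a)
    (hB : ∀ i < n, Measurable[ℱ i] (B i)) (hBb : ∀ i ω, |B i ω| ≤ b)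
    (hH : ∀ i ≤ n, Integrable (H i) μ)
    (hstep : ∀ i < n, ∀ᵐ ω ∂μ, H (i + 1) ω ≤ H i ω + (X (i + 1) ω * A i ω
      + (X (i + 1) ω ^ 2 - (μ[fun ω ↦ X (i + 1) ω ^ 2 | ℱ i]) ω) * B i ω
      + C * (|X (i + 1) ω| ^ (2 * p) + (μ[fun ω ↦ X (i + 1) ω ^ 2 | ℱ i]) ω ^ p))) :
    ∫ ω, H n ω ∂μ ≤ ∫ ω, H 0 ω ∂μ + 2 * C * ∑ i ∈ Icc 1 n, ∫ ω, |X i ω| ^ (2 * p) ∂μ := by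
  suffices ∀ k ≤ n, ∫ ω, H k ω ∂μ
      ≤ ∫ ω, H 0 ω ∂μ + 2 * C * ∑ i ∈ Icc 1 k, ∫ ω, |X i ω| ^ (2 * p) ∂μ from this n le_rfl
  intro k
  induction k with
  | zero => simp
  | succ k ih =>
    intro hk
    have hmem : k + 1 ∈ Icc 1 n := mem_Icc.2 ⟨k.succ_pos, hk⟩
    have hk' : k < n := hk
    have := integral_le_add_of_martingale_step (ℱ.le k) hp hC (h.integrable _ hmem)
      (h.condExp_eq_zero _ hmem) (hXp _ hmem) (hA k hk') (hAa k) (hB k hk') (hBb k) (hH k hk'.le)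
      (hH _ hk) (hstep k hk')
    rw [sum_Icc_succ_top (by omega)]
    linarith [ih hk'.le]

theorem measurable_of_le (h : IsMartingaleDifference X ℱ μ n) {i j : ℕ} (hj : j ∈ Icc 1 i)
    (hi : i ≤ n) : Measurable[ℱ i] (X j) :=
  have hj' := mem_Icc.1 hj
  ((h.stronglyMeasurable j (mem_Icc.2 ⟨hj'.1, hj'.2.trans hi⟩)).mono (ℱ.mono hj'.2)).measurable

theorem measurable_partialSum (h : IsMartingaleDifference X ℱ μ n) {i : ℕ} (hi : i ≤ n) :
    Measurable[ℱ i] (partialSum X i) :=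
  _root_.measurable_partialSum fun _ hj ↦ h.measurable_of_le hj hi

theorem measurable_squaredVariation (h : IsMartingaleDifference X ℱ μ n) {i : ℕ} (hi : i ≤ n) :
    Measurable[ℱ i] (squaredVariation X i) :=
  _root_.measurable_partialSum fun _ hj ↦ (h.measurable_of_le hj hi).pow_const 2

theorem integrable_comp_partialSum [IsFiniteMeasure μ] (h : IsMartingaleDifference X ℱ μ n)
    {V : ℝ → ℝ → ℝ} {K : ℝ} (hV : Measurable V.uncurry) (hVK : ∀ s v, |V s v| ≤ K) (y c : ℝ)
    {i : ℕ} (hi : i ≤ n) :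
    Integrable (fun ω ↦ V (partialSum X i ω - y) (c - predictableVariation μ ℱ X i ω)) μ := by
  have hS := (h.measurable_partialSum hi).mono (ℱ.le i) le_rfl
  have hT := (measurable_predictableVariation μ X i.le_succ).mono (ℱ.le i) le_rfl
  exact .of_bound (hV.comp ((hS.sub_const y).prodMk (hT.const_sub c))).aestronglyMeasurable K
    (ae_of_all _ fun ω ↦ hVK _ _)

theorem integral_comp_partialSum_le [IsProbabilityMeasure μ] (h : IsMartingaleDifference X ℱ μ n)
    {V A B : ℝ → ℝ → ℝ} {p C K a b : ℝ} (hp : 1 ≤ p) (hC : 0 ≤ C)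
    (hXp : ∀ i ∈ Icc 1 n, Integrable (fun ω ↦ |X i ω| ^ (2 * p)) μ)
    (hV : Measurable V.uncurry) (hVK : ∀ s v, |V s v| ≤ K)
    (hA : Measurable A.uncurry) (hAa : ∀ s v, |A s v| ≤ a)
    (hB : Measurable B.uncurry) (hBb : ∀ s v, |B s v| ≤ b)
    (hstep : ∀ s v x q : ℝ, 0 ≤ q → V (s + x) v
      ≤ V s (v + q) + (x * A s v + (x ^ 2 - q) * B s v + C * (|x| ^ (2 * p) + q ^ p))) (y c : ℝ) :
    ∫ ω, V (partialSum X n ω - y) (c - predictableVariation μ ℱ X n ω) ∂μ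
      ≤ V (-y) c + 2 * C * ∑ i ∈ Icc 1 n, ∫ ω, |X i ω| ^ (2 * p) ∂μ := by
  set S := partialSum X
  set T := predictableVariation μ ℱ X
  have hstate (i : ℕ) (hi : i < n) : Measurable[ℱ i] fun ω ↦ (S i ω - y, c - T (i + 1) ω) :=
    ((h.measurable_partialSum hi.le).sub_const y).prodMk
      ((measurable_predictableVariation μ X le_rfl).const_sub c)
  have htelescope := h.integral_le_add_sum_of_step hp hC hXp
    (A := fun i ω ↦ A (S i ω - y) (c - T (i + 1) ω))
    (B := fun i ω ↦ B (S i ω - y) (c - T (i + 1) ω)) (H := fun i ω ↦ V (S i ω - y) (c - T i ω))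
    (fun i hi ↦ hA.comp (hstate i hi)) (fun i ω ↦ hAa _ _)
    (fun i hi ↦ hB.comp (hstate i hi)) (fun i ω ↦ hBb _ _)
    (fun i hi ↦ h.integrable_comp_partialSum hV hVK y c hi) fun i _ ↦ ?_
  · simpa [S, T, predictableVariation, partialSum_zero] using htelescope
  · filter_upwards [condExp_sq_nonneg (X (i + 1)) (ℱ i)] with ω hq
    have hS : S (i + 1) ω - y = S i ω - y + X (i + 1) ω := by
      simp only [S, partialSum_succ]
      ring
    have hT : c - T i ω = c - T (i + 1) ω + (μ[fun ω ↦ X (i + 1) ω ^ 2 | ℱ i]) ω := by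
      simp only [T, predictableVariation_succ]
      ring
    simpa only [hS, hT] using hstep _ _ _ _ hq

theorem integrable_truncExp [IsFiniteMeasure μ] (h : IsMartingaleDifference X ℱ μ n) (l u r : ℝ)
    {i : ℕ} (hi : i ≤ n) :
    Integrable (fun ω ↦ truncExp l
      (u - squaredVariation X i ω + r * predictableVariation μ ℱ X i ω)) μ := by
  have hR := (h.measurable_squaredVariation hi).mono (ℱ.le i) le_rfl
  have hT := (measurable_predictableVariation μ X i.le_succ).mono (ℱ.le i) le_rfl
  refine .of_bound ((measurable_truncExp l).comp
    ((hR.const_sub u).add (hT.const_mul r))).aestronglyMeasurable 1 (ae_of_all _ fun ω ↦ ?_)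
  rw [Real.norm_of_nonneg (truncExp_nonneg _ _)]
  exact truncExp_le_one _ _

theorem integral_truncExp_le [IsProbabilityMeasure μ] (h : IsMartingaleDifference X ℱ μ n)
    {p a : ℝ} (hp : 1 ≤ p) (ha₀ : 0 < a) (ha₁ : a ≤ 1) (hap : a ^ p ≤ 1 / 2)
    (hXp : ∀ i ∈ Icc 1 n, Integrable (fun ω ↦ |X i ω| ^ (2 * p)) μ) (u : ℝ) :
    ∫ ω, truncExp (a ^ (p - 1))
        (u - squaredVariation X n ω + (1 - 2 * a ^ p) * predictableVariation μ ℱ X n ω) ∂μ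
      ≤ truncExp (a ^ (p - 1)) u + 2 * ∑ i ∈ Icc 1 n, ∫ ω, |X i ω| ^ (2 * p) ∂μ := by
  set U : ℕ → Ω → ℝ := fun i ω ↦
    u - squaredVariation X i ω + (1 - 2 * a ^ p) * predictableVariation μ ℱ X i ω
  set q : ℕ → Ω → ℝ := fun i ↦ μ[fun ω ↦ X (i + 1) ω ^ 2 | ℱ i]
  have hl₀ : 0 ≤ a ^ (p - 1) := by positivity
  have hl₁ : a ^ (p - 1) ≤ 1 := Real.rpow_le_one ha₀.le ha₁ (by linarith)
  have hstate (i : ℕ) (hi : i < n) : Measurable[ℱ i] fun ω ↦ (U i ω, q i ω) :=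
    (((h.measurable_squaredVariation hi.le).const_sub u).add
      ((measurable_predictableVariation μ X i.le_succ).const_mul _)).prodMk
        stronglyMeasurable_condExp.measurable
  have htelescope := h.integral_le_add_sum_of_step hp zero_le_one hXp (A := fun _ _ ↦ 0)
    (B := fun i ω ↦ truncExpDrift (a ^ (p - 1)) (a ^ p) (U i ω) (q i ω))
    (H := fun i ω ↦ truncExp (a ^ (p - 1)) (U i ω))
    (fun _ _ ↦ measurable_const) (fun i ω ↦ abs_zero.le)
    (fun i hi ↦ (measurable_uncurry_truncExpDrift _ _).comp (hstate i hi))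
    (fun i ω ↦ abs_truncExpDrift_le_one hl₀ hl₁ (by positivity) (by linarith) _ _)
    (fun i hi ↦ h.integrable_truncExp _ _ _ hi) fun i _ ↦ ?_
  · simpa [U, squaredVariation, predictableVariation, partialSum_zero] using htelescope
  · filter_upwards [condExp_sq_nonneg (X (i + 1)) (ℱ i)] with ω hω
    have hUsucc : U (i + 1) ω = U i ω - X (i + 1) ω ^ 2 + (1 - 2 * a ^ p) * q i ω := by
      simp only [U, q, squaredVariation_succ, predictableVariation_succ]
      ring
    rw [hUsucc, mul_zero, zero_add, one_mul]
    exact truncExp_step hp ha₀ ha₁ hap (U i ω) (X (i + 1) ω) hω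

end IsMartingaleDifference

end MartingaleDifference

section BerryEsseen

theorem measureReal_one_le_le_integral {Ω : Type*} {mΩ : MeasurableSpace Ω} {μ : Measure Ω}
    {f : Ω → ℝ} (hf₀ : ∀ ω, 0 ≤ f ω) (hf : Integrable f μ) :
    μ.real {ω | 1 ≤ f ω} ≤ ∫ ω, f ω ∂μ := by
  simpa only [one_mul] using mul_meas_ge_le_integral_of_nonneg (ae_of_all _ hf₀) hf 1

theorem selfNormalized_le_cases {s r v t₁ t₂ x L : ℝ} (hL : 8 ≤ L) (ht₁ : 0 ≤ t₁) (ht₂ : 0 ≤ t₂)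
    (ht : t₁ + t₂ ≤ 1) (hx : x ≤ 0) (hs : s ≤ x * √(t₁ * v + t₂ * r + (1 - t₁ - t₂) * L ^ 2)) :
    1 ≤ |v - L ^ 2| ∨ 0 ≤ -2 * L + 1 - 2 * L⁻¹ - r + (1 - 2 * L⁻¹) * v ∨
      |v - L ^ 2| ≤ 1 ∧ s - x * √(L ^ 2 - 4 * L) ≤ 0 := by
  rcases le_or_gt 1 |v - L ^ 2| with hv | hv
  · exact .inl hv
  obtain ⟨hv₁, -⟩ := abs_lt.1 hv
  have hL₀ : 0 < L := by linarith
  rcases le_or_gt r (L ^ 2 - 4 * L) with hr | hr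
  · right; left
    have hcoeff : 0 ≤ 1 - 2 * L⁻¹ := by
      linarith [(inv_le_inv₀ hL₀ (by norm_num)).2 hL]
    have hdrift : -2 * L + 1 - 2 * L⁻¹ + (1 - 2 * L⁻¹) * (L ^ 2 - 1) = L ^ 2 - 4 * L := by
      field_simp
      ring
    linarith [mul_le_mul_of_nonneg_left (by linarith : L ^ 2 - 1 ≤ v) hcoeff]
  · right; right
    have hv' : L ^ 2 - 4 * L ≤ v := by linarith
    have hvar : L ^ 2 - 4 * L ≤ t₁ * v + t₂ * r + (1 - t₁ - t₂) * L ^ 2 := by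
      linarith [mul_le_mul_of_nonneg_left hv' ht₁, mul_le_mul_of_nonneg_left hr.le ht₂,
        mul_nonneg (sub_nonneg.2 ht) hL₀.le]
    have := mul_le_mul_of_nonpos_left (Real.sqrt_le_sqrt hvar) hx
    exact ⟨hv.le, by linarith⟩

theorem stdNormalCDF_mul_sqrt_div_le {b L : ℝ} (hb : 0 ≤ b) (hL : 8 ≤ L) (x : ℝ) :
    stdNormalCDF (x * √((L ^ 2 - 4 * L) / (b + L ^ 2))) ≤ stdNormalCDF x + (4 + b) * L⁻¹ := by
  have hnum : L ^ 2 / 2 ≤ L ^ 2 - 4 * L := by nlinarith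
  have hnum₀ : 0 < L ^ 2 - 4 * L := lt_of_lt_of_le (by positivity) hnum
  have hden : 0 < b + L ^ 2 := by positivity
  set ρ := (L ^ 2 - 4 * L) / (b + L ^ 2) with hρ
  have hρ₀ : 0 < ρ := by positivity
  have hρ₁ : ρ ≤ 1 := (div_le_one hden).2 (by linarith)
  have hlog : -Real.log √ρ ≤ (4 + b) * L⁻¹ :=
    calc -Real.log √ρ = Real.log ρ⁻¹ / 2 := by rw [Real.log_sqrt hρ₀.le, Real.log_inv]; ring
      _ ≤ (ρ⁻¹ - 1) / 2 := by gcongr; exact Real.log_le_sub_one_of_pos (inv_pos.2 hρ₀)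
      _ = (4 * L + b) / 2 / (L ^ 2 - 4 * L) := by
        rw [hρ, inv_div, div_sub_one hnum₀.ne']
        ring
      _ ≤ (4 * L + b * L) / 2 / (L ^ 2 / 2) := by
        gcongr
        exact le_mul_of_one_le_right hb (by linarith)
      _ = (4 + b) * L⁻¹ := by field_simp
  linarith [stdNormalCDF_mul_sub_le_neg_log (Real.sqrt_pos.2 hρ₀) (Real.sqrt_le_one.2 hρ₁) x]

theorem cutoff_potentialDeriv_zero_start_le {κ M L : ℝ} (hκ : 0 < κ) (hM : 0 ≤ M) (hL : 8 ≤ L)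
    (x : ℝ) :
    cutoff (1 / κ) (potentialDeriv κ M 0) (-(x * √(L ^ 2 - 4 * L))) (1 / κ + 1 + L ^ 2)
      ≤ stdNormalCDF x + (4 + (1 / κ + 1) + 2 * M) * L⁻¹ := by
  have hL₀ : 0 < L := by linarith
  have hκ' : 0 < 1 / κ := by positivity
  set v := 1 / κ + 1 + L ^ 2
  have hLv : (√v)⁻¹ ≤ L⁻¹ := inv_anti₀ hL₀ (Real.le_sqrt_of_sq_le (by linarith))
  have hratio : -(-(x * √(L ^ 2 - 4 * L)) / √v) = x * √((L ^ 2 - 4 * L) / v) := by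
    rw [Real.sqrt_div (by nlinarith)]
    ring
  calc cutoff (1 / κ) (potentialDeriv κ M 0) (-(x * √(L ^ 2 - 4 * L))) v
      ≤ stdNormalCDF (x * √((L ^ 2 - 4 * L) / v)) + 2 * M * (√v)⁻¹ := by
        rw [cutoff, if_pos (by nlinarith), ← hratio]
        exact potentialDeriv_zero_le hM _ (by positivity)
    _ ≤ stdNormalCDF x + (4 + (1 / κ + 1)) * L⁻¹ + 2 * M * L⁻¹ := by
        gcongr
        exact stdNormalCDF_mul_sqrt_div_le (by positivity) hL x
    _ = _ := by ring

theorem one_le_cutoff_potentialDeriv_zero {κ M s v L : ℝ} (hκ₀ : 0 < κ) (hκ₁ : κ ≤ 1)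
    (hM : √(2 * Real.pi) * (1 / κ + 2) ≤ M) (hs : s ≤ 0) (hv : |v - L ^ 2| ≤ 1) :
    1 ≤ cutoff (1 / κ) (potentialDeriv κ M 0) s (1 / κ + 1 + L ^ 2 - v) := by
  obtain ⟨hv₁, hv₂⟩ := abs_le.1 hv
  have hκ : 1 ≤ 1 / κ := (one_le_div hκ₀).2 hκ₁
  have hM₀ : 0 ≤ M := le_trans (by positivity) hM
  rw [cutoff, if_pos (by linarith)]
  refine one_le_potentialDeriv_zero hκ₀.le hM₀ hs (by linarith) (le_trans ?_ hM)
  gcongr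
  exact (Real.sqrt_le_left (by linarith)).2 (by nlinarith)

theorem partialSum_const_mul {Ω : Type*} (L : ℝ) (X : ℕ → Ω → ℝ) (k : ℕ) (ω : Ω) :
    partialSum (fun i ω ↦ L * X i ω) k ω = L * partialSum X k ω :=
  (mul_sum _ _ _).symm

theorem squaredVariation_const_mul {Ω : Type*} (L : ℝ) (X : ℕ → Ω → ℝ) (k : ℕ) (ω : Ω) :
    squaredVariation (fun i ω ↦ L * X i ω) k ω = L ^ 2 * squaredVariation X k ω := by
  simp only [squaredVariation, mul_pow, partialSum_const_mul]

theorem predictableVariation_const_mul {Ω : Type*} {mΩ : MeasurableSpace Ω} (μ : Measure Ω)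
    (ℱ : Filtration ℕ mΩ) (L : ℝ) (X : ℕ → Ω → ℝ) (k : ℕ) :
    predictableVariation μ ℱ (fun i ω ↦ L * X i ω) k
      =ᵐ[μ] fun ω ↦ L ^ 2 * predictableVariation μ ℱ X k ω := by
  have hterm (i : ℕ) : μ[fun ω ↦ (L * X i ω) ^ 2 | ℱ (i - 1)]
      =ᵐ[μ] fun ω ↦ L ^ 2 * (μ[fun ω ↦ X i ω ^ 2 | ℱ (i - 1)]) ω := by
    simp only [mul_pow]
    exact condExp_smul (L ^ 2) (fun ω ↦ X i ω ^ 2) (ℱ (i - 1))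
  filter_upwards [ae_all_iff.2 hterm] with ω hω
  simp only [predictableVariation, partialSum, hω, mul_sum]

theorem IsMartingaleDifference.const_mul {Ω : Type*} {mΩ : MeasurableSpace Ω} {μ : Measure Ω}
    {ℱ : Filtration ℕ mΩ} {n : ℕ} {X : ℕ → Ω → ℝ} (h : IsMartingaleDifference X ℱ μ n) (L : ℝ) :
    IsMartingaleDifference (fun i ω ↦ L * X i ω) ℱ μ n where
  stronglyMeasurable i hi := (h.stronglyMeasurable i hi).const_mul L
  integrable i hi := (h.integrable i hi).const_mul L
  condExp_eq_zero i hi := by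
    have hsmul : μ[fun ω ↦ L * X i ω | ℱ (i - 1)] =ᵐ[μ] L • μ[X i | ℱ (i - 1)] :=
      condExp_smul L (X i) (ℱ (i - 1))
    filter_upwards [hsmul, h.condExp_eq_zero i hi] with ω hω hω₀
    simp [hω, hω₀]

theorem exists_measureReal_squaredVariation_le.{u} {p : ℝ} (hp : 1 ≤ p) :
    ∃ C, 0 ≤ C ∧ ∀ {Ω : Type u} {mΩ : MeasurableSpace Ω} {μ : Measure Ω} [IsProbabilityMeasure μ]
      {ℱ : Filtration ℕ mΩ} {n : ℕ} {X : ℕ → Ω → ℝ}, IsMartingaleDifference X ℱ μ n →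
      (∀ i ∈ Icc 1 n, Integrable (fun ω ↦ |X i ω| ^ (2 * p)) μ) → ∀ L : ℝ, 8 ≤ L →
      μ.real {ω | 0 ≤ -2 * L + 1 - 2 * L⁻¹ - squaredVariation X n ω
          + (1 - 2 * L⁻¹) * predictableVariation μ ℱ X n ω}
        ≤ C * L⁻¹ + 2 * ∑ i ∈ Icc 1 n, ∫ ω, |X i ω| ^ (2 * p) ∂μ := by
  have hp₀ : 0 < p := by linarith
  obtain ⟨C, hC, hexp⟩ := exists_exp_neg_inv_le_rpow p
  refine ⟨C, hC, fun {Ω _ μ _ ℱ n X} h hXp L hL ↦ ?_⟩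
  have hL₀ : 0 < L⁻¹ := by positivity
  have hL₁ : L⁻¹ ≤ 1 / 2 := (inv_le_of_inv_le₀ (by norm_num) (by linarith))
  set a := L⁻¹ ^ p⁻¹
  have ha₀ : 0 < a := by positivity
  have ha₁ : a ≤ 1 := Real.rpow_le_one hL₀.le (by linarith) (by positivity)
  have hap : a ^ p = L⁻¹ := Real.rpow_inv_rpow hL₀.le hp₀.ne'
  set u := -2 * L + 1 - 2 * L⁻¹
  have hstart : truncExp (a ^ (p - 1)) u ≤ C * L⁻¹ :=
    calc truncExp (a ^ (p - 1)) u ≤ Real.exp (-a⁻¹) :=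
          truncExp_rpow_le ha₀ (by rw [hap, inv_inv]; linarith)
      _ ≤ C * L⁻¹ := hap ▸ hexp a ha₀ ha₁
  have hmean := h.integral_truncExp_le hp ha₀ ha₁ (hap.trans_le hL₁) hXp u
  rw [hap] at hmean
  calc μ.real {ω | 0 ≤ u - squaredVariation X n ω + (1 - 2 * L⁻¹) * predictableVariation μ ℱ X n ω}
      ≤ μ.real {ω | 1 ≤ truncExp (a ^ (p - 1))
          (u - squaredVariation X n ω + (1 - 2 * L⁻¹) * predictableVariation μ ℱ X n ω)} :=
        measureReal_mono fun ω hω ↦ (truncExp_of_nonneg (by positivity) hω).ge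
    _ ≤ _ := measureReal_one_le_le_integral (fun ω ↦ truncExp_nonneg _ _)
        (h.integrable_truncExp _ _ _ le_rfl)
    _ ≤ _ := hmean
    _ ≤ _ := by gcongr

theorem exists_integral_cutoff_potentialDeriv_zero_le.{u} {κ M p : ℝ} (hκ₀ : 0 < κ) (hκ₁ : κ ≤ 1)
    (hM : 0 < M) (hp₁ : 1 ≤ p) (hp₂ : 2 * p ≤ 2 + 1 / κ) :
    ∃ C, 0 ≤ C ∧ ∀ {Ω : Type u} {mΩ : MeasurableSpace Ω} {μ : Measure Ω} [IsProbabilityMeasure μ]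
      {ℱ : Filtration ℕ mΩ} {n : ℕ} {X : ℕ → Ω → ℝ}, IsMartingaleDifference X ℱ μ n →
      (∀ i ∈ Icc 1 n, Integrable (fun ω ↦ |X i ω| ^ (2 * p)) μ) → ∀ y c : ℝ,
      Integrable (fun ω ↦ cutoff (1 / κ) (potentialDeriv κ M 0) (partialSum X n ω - y)
        (c - predictableVariation μ ℱ X n ω)) μ ∧
      ∫ ω, cutoff (1 / κ) (potentialDeriv κ M 0) (partialSum X n ω - y)
          (c - predictableVariation μ ℱ X n ω) ∂μ
        ≤ cutoff (1 / κ) (potentialDeriv κ M 0) (-y) c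
          + C * ∑ i ∈ Icc 1 n, ∫ ω, |X i ω| ^ (2 * p) ∂μ := by
  have hκ : 1 ≤ 1 / κ := (one_le_div hκ₀).2 hκ₁
  obtain ⟨C, hC, hstep⟩ := exists_cutoff_potentialDeriv_step hκ₀ hκ₁ hM hp₁ hp₂
  obtain ⟨K₀, hK₀, hV₀⟩ := exists_abs_potentialDeriv_le (M := M) 0 hκ₀ hκ₁ hM.le
  obtain ⟨K₁, hK₁, hV₁⟩ := exists_abs_potentialDeriv_le (M := M) 1 hκ₀ hκ₁ hM.le
  obtain ⟨K₂, hK₂, hV₂⟩ := exists_abs_potentialDeriv_le (M := M) 2 hκ₀ hκ₁ hM.le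
  have hbound {f : ℝ → ℝ → ℝ} {K : ℝ} (hK : 0 ≤ K) (hf : ∀ s v, 1 ≤ v → |f s v| ≤ K) (s v : ℝ) :
      |cutoff (1 / κ) f s v| ≤ K :=
    abs_cutoff_le hK (fun s v hv ↦ hf s v (hκ.trans hv)) s v
  have hdrift (s v : ℝ) (hv : 1 ≤ v) :
      |(potentialDeriv κ M 2 s v + potentialGain κ M 0 s v) / 2| ≤ (K₂ + M * κ) / 2 := by
    have hgain₀ := potentialGain_zero_nonneg hκ₀.le hM.le s (v := v) (by linarith)
    have hgain₁ := potentialGain_zero_le hκ₀.le hM.le s hv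
    obtain ⟨hV₂_lower, hV₂_upper⟩ := abs_le.1 (hV₂ s v hv)
    have : 0 ≤ M * κ := by positivity
    exact abs_le.2 ⟨by linarith, by linarith⟩
  have hV₀_meas := measurable_uncurry_cutoff (a := 1 / κ)
    (measurable_uncurry_potentialDeriv (κ := κ) (M := M) 0)
  have hdrift_meas := measurable_uncurry_cutoff (a := 1 / κ)
    (f := fun s v ↦ (potentialDeriv κ M 2 s v + potentialGain κ M 0 s v) / 2)
    (((measurable_uncurry_potentialDeriv 2).add (measurable_uncurry_potentialGain 0)).div_const 2)
  refine ⟨2 * C, by positivity, fun h hXp y c ↦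
    ⟨h.integrable_comp_partialSum hV₀_meas (hbound hK₀ hV₀) y c le_rfl,
      h.integral_comp_partialSum_le hp₁ hC hXp hV₀_meas (hbound hK₀ hV₀)
        (measurable_uncurry_cutoff (measurable_uncurry_potentialDeriv 1)) (hbound hK₁ hV₁)
        hdrift_meas
        (hbound (by positivity) hdrift) hstep y c⟩⟩

theorem exists_measureReal_partialSum_le.{u} {p : ℝ} (hp : 1 ≤ p) :
    ∃ C, 0 ≤ C ∧ ∀ {Ω : Type u} {mΩ : MeasurableSpace Ω} {μ : Measure Ω} [IsProbabilityMeasure μ]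
      {ℱ : Filtration ℕ mΩ} {n : ℕ} {X : ℕ → Ω → ℝ}, IsMartingaleDifference X ℱ μ n →
      (∀ i ∈ Icc 1 n, Integrable (fun ω ↦ |X i ω| ^ (2 * p)) μ) → ∀ L x : ℝ, 8 ≤ L →
      μ.real {ω | |predictableVariation μ ℱ X n ω - L ^ 2| ≤ 1 ∧
          partialSum X n ω - x * √(L ^ 2 - 4 * L) ≤ 0}
        ≤ stdNormalCDF x + C * (L⁻¹ + ∑ i ∈ Icc 1 n, ∫ ω, |X i ω| ^ (2 * p) ∂μ) := by
  set κ := 1 / (2 * p) with hκ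
  have hκ₀ : 0 < κ := by positivity
  have hκ₁ : κ ≤ 1 := (div_le_one (by positivity)).2 (by linarith)
  have hκp : 2 * p ≤ 2 + 1 / κ := by rw [hκ, one_div_one_div]; linarith
  set M := √(2 * Real.pi) * (1 / κ + 2)
  have hM : 0 < M := by positivity
  obtain ⟨C, hC, hV⟩ := exists_integral_cutoff_potentialDeriv_zero_le hκ₀ hκ₁ hM hp hκp
  refine ⟨(4 + (1 / κ + 1) + 2 * M) + C, by positivity, fun {Ω _ μ _ ℱ n X} h hXp L x hL ↦ ?_⟩
  obtain ⟨hint, hmean⟩ := hV h hXp (x * √(L ^ 2 - 4 * L)) (1 / κ + 1 + L ^ 2)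
  set σ := ∑ i ∈ Icc 1 n, ∫ ω, |X i ω| ^ (2 * p) ∂μ
  set W : Ω → ℝ := fun ω ↦ cutoff (1 / κ) (potentialDeriv κ M 0)
    (partialSum X n ω - x * √(L ^ 2 - 4 * L)) (1 / κ + 1 + L ^ 2 - predictableVariation μ ℱ X n ω)
  calc _ ≤ μ.real {ω | 1 ≤ W ω} := measureReal_mono fun ω hω ↦
        one_le_cutoff_potentialDeriv_zero hκ₀ hκ₁ le_rfl hω.2 hω.1
    _ ≤ ∫ ω, W ω ∂μ := measureReal_one_le_le_integral
        (fun ω ↦ cutoff_potentialDeriv_zero_nonneg hκ₀ hκ₁ hM.le _ _) hint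
    _ ≤ stdNormalCDF x + (4 + (1 / κ + 1) + 2 * M) * L⁻¹ + C * σ :=
        hmean.trans (by gcongr; exact cutoff_potentialDeriv_zero_start_le hκ₀ hM.le hL x)
    _ ≤ stdNormalCDF x + ((4 + (1 / κ + 1) + 2 * M) + C) * (L⁻¹ + σ) := by
        have : 0 ≤ C * L⁻¹ + (4 + (1 / κ + 1) + 2 * M) * σ := by positivity
        linarith

/-- The paper's `N_n`, with the variance of the normal approximation equal to `b` instead of `1`. -/
noncomputable def normalityError {Ω : Type*} {mΩ : MeasurableSpace Ω} (μ : Measure Ω)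
    (ℱ : Filtration ℕ mΩ) (X : ℕ → Ω → ℝ) (n : ℕ) (p b : ℝ) : ℝ :=
  ∑ i ∈ Icc 1 n, ∫ ω, |X i ω| ^ (2 * p) ∂μ + ∫ ω, |predictableVariation μ ℱ X n ω - b| ^ p ∂μ

theorem normalityError_nonneg {Ω : Type*} {mΩ : MeasurableSpace Ω} (μ : Measure Ω)
    (ℱ : Filtration ℕ mΩ) (X : ℕ → Ω → ℝ) (n : ℕ) (p b : ℝ) : 0 ≤ normalityError μ ℱ X n p b :=
  add_nonneg (sum_nonneg fun i _ ↦ integral_nonneg fun ω ↦ by positivity)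
    (integral_nonneg fun ω ↦ by positivity)

theorem abs_mul_rpow {L : ℝ} (hL : 0 ≤ L) (x r : ℝ) : |L * x| ^ r = L ^ r * |x| ^ r := by
  rw [abs_mul, abs_of_nonneg hL, Real.mul_rpow hL (abs_nonneg x)]

theorem normalityError_const_mul {Ω : Type*} {mΩ : MeasurableSpace Ω} (μ : Measure Ω)
    (ℱ : Filtration ℕ mΩ) {L : ℝ} (hL : 0 ≤ L) (X : ℕ → Ω → ℝ) (n : ℕ) (p b : ℝ) :
    normalityError μ ℱ (fun i ω ↦ L * X i ω) n p (L ^ 2 * b)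
      = L ^ (2 * p) * normalityError μ ℱ X n p b := by
  have hvar : ∫ ω, |predictableVariation μ ℱ (fun i ω ↦ L * X i ω) n ω - L ^ 2 * b| ^ p ∂μ
      = L ^ (2 * p) * ∫ ω, |predictableVariation μ ℱ X n ω - b| ^ p ∂μ := by
    rw [← integral_const_mul]
    refine integral_congr_ae ?_
    filter_upwards [predictableVariation_const_mul μ ℱ L X n] with ω hω
    rw [hω, ← mul_sub, abs_mul_rpow (sq_nonneg L), sq_rpow, abs_of_nonneg hL]
  simp only [normalityError, hvar, abs_mul_rpow hL, integral_const_mul, ← mul_sum, mul_add]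

theorem exists_measureReal_selfNormalized_le.{u} {p : ℝ} (hp : 1 ≤ p) :
    ∃ C, 0 ≤ C ∧ ∀ {Ω : Type u} {mΩ : MeasurableSpace Ω} {μ : Measure Ω} [IsProbabilityMeasure μ]
      {ℱ : Filtration ℕ mΩ} {n : ℕ} {X : ℕ → Ω → ℝ}, IsMartingaleDifference X ℱ μ n →
      (∀ i ∈ Icc 1 n, Integrable (fun ω ↦ |X i ω| ^ (2 * p)) μ) →
      ∀ t₁ t₂ : ℝ, 0 ≤ t₁ → 0 ≤ t₂ → t₁ + t₂ ≤ 1 → ∀ x ≤ 0, ∀ L : ℝ, 8 ≤ L →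
      μ.real {ω | partialSum X n ω ≤ x * √(t₁ * predictableVariation μ ℱ X n ω
          + t₂ * squaredVariation X n ω + (1 - t₁ - t₂) * L ^ 2)}
        ≤ stdNormalCDF x + C * (L⁻¹ + normalityError μ ℱ X n p (L ^ 2)) := by
  obtain ⟨C₁, hC₁, hsq⟩ := exists_measureReal_squaredVariation_le hp
  obtain ⟨C₂, hC₂, hsum⟩ := exists_measureReal_partialSum_le hp
  refine ⟨C₁ + C₂ + 2, by positivity,
    fun {Ω _ μ _ ℱ n X} h hXp t₁ t₂ ht₁ ht₂ ht x hx L hL ↦ ?_⟩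
  have hR := hsq h hXp L hL
  have hS := hsum h hXp L x hL
  set S := partialSum X n
  set R := squaredVariation X n
  set T := predictableVariation μ ℱ X n with hT
  have hvar : μ.real {ω | 1 ≤ |T ω - L ^ 2|} ≤ ∫ ω, |T ω - L ^ 2| ^ p ∂μ :=
    (measureReal_mono fun ω hω ↦ Real.one_le_rpow hω (by linarith)).trans
      (measureReal_one_le_le_integral (fun ω ↦ by positivity)
        (integrable_abs_predictableVariation_sub_rpow hp
          (fun i hi ↦ (h.integrable i hi).aestronglyMeasurable) hXp _))
  have hcover : {ω | S ω ≤ x * √(t₁ * T ω + t₂ * R ω + (1 - t₁ - t₂) * L ^ 2)}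
      ⊆ {ω | 1 ≤ |T ω - L ^ 2|} ∪ ({ω | 0 ≤ -2 * L + 1 - 2 * L⁻¹ - R ω + (1 - 2 * L⁻¹) * T ω}
        ∪ {ω | |T ω - L ^ 2| ≤ 1 ∧ S ω - x * √(L ^ 2 - 4 * L) ≤ 0}) :=
    fun ω hω ↦ selfNormalized_le_cases hL ht₁ ht₂ ht hx hω
  have hunion := (measureReal_mono (μ := μ) hcover).trans ((measureReal_union_le _ _).trans
    (add_le_add_right (measureReal_union_le _ _) _))
  rw [normalityError, ← hT]
  set σ := ∑ i ∈ Icc 1 n, ∫ ω, |X i ω| ^ (2 * p) ∂μ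
  set τ := ∫ ω, |T ω - L ^ 2| ^ p ∂μ
  have : 0 ≤ C₁ * (σ + τ) + C₂ * τ + 2 * L⁻¹ + τ := by positivity
  linarith

theorem selfNormalized_const_mul_iff {L s s' x v v' : ℝ} (hL : 0 < L) (hs : s' = L * s)
    (hv : v' = L ^ 2 * v) : s' ≤ x * √v' ↔ s ≤ x * √v := by
  rw [hs, hv, Real.sqrt_mul (sq_nonneg L), Real.sqrt_sq hL.le, mul_left_comm,
    mul_le_mul_iff_right₀ hL]

theorem exists_measureReal_selfNormalized_sub_stdNormalCDF_le.{u} {p : ℝ} (hp : 1 ≤ p) :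
    ∃ C, 0 < C ∧ ∀ {Ω : Type u} {mΩ : MeasurableSpace Ω} {μ : Measure Ω} [IsProbabilityMeasure μ]
      {ℱ : Filtration ℕ mΩ} {n : ℕ} {X : ℕ → Ω → ℝ}, IsMartingaleDifference X ℱ μ n →
      (∀ i ∈ Icc 1 n, Integrable (fun ω ↦ |X i ω| ^ (2 * p)) μ) →
      ∀ t₁ t₂ : ℝ, 0 ≤ t₁ → 0 ≤ t₂ → t₁ + t₂ ≤ 1 → ∀ x ≤ 0, ∀ L : ℝ, 0 < L →
      μ.real {ω | partialSum X n ω ≤ x * √(t₁ * predictableVariation μ ℱ X n ω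
          + t₂ * squaredVariation X n ω + (1 - t₁ - t₂))} - stdNormalCDF x
        ≤ C * (L⁻¹ + L ^ (2 * p) * normalityError μ ℱ X n p 1) := by
  obtain ⟨C, hC, hscaled⟩ := exists_measureReal_selfNormalized_le hp
  refine ⟨C + 8, by positivity, fun {Ω _ μ _ ℱ n X} h hXp t₁ t₂ ht₁ ht₂ ht x hx L hL ↦ ?_⟩
  set E := {ω | partialSum X n ω ≤ x * √(t₁ * predictableVariation μ ℱ X n ω
    + t₂ * squaredVariation X n ω + (1 - t₁ - t₂))}
  have hN := normalityError_nonneg μ ℱ X n p 1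
  rcases lt_or_ge L 8 with hL₈ | hL₈
  · have hL₁ : 1 ≤ 8 * L⁻¹ := by
      rw [← div_eq_mul_inv, one_le_div hL]
      exact hL₈.le
    have : 0 ≤ C * (L⁻¹ + L ^ (2 * p) * normalityError μ ℱ X n p 1)
        + 8 * (L ^ (2 * p) * normalityError μ ℱ X n p 1) := by positivity
    linarith [measureReal_le_one (μ := μ) (s := E), stdNormalCDF_nonneg x]
  set Y : ℕ → Ω → ℝ := fun i ω ↦ L * X i ω
  have hYp : ∀ i ∈ Icc 1 n, Integrable (fun ω ↦ |Y i ω| ^ (2 * p)) μ := fun i hi ↦ by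
    simpa only [Y, abs_mul_rpow hL.le] using (hXp i hi).const_mul (L ^ (2 * p))
  have hevent : E =ᵐ[μ] {ω | partialSum Y n ω ≤ x * √(t₁ * predictableVariation μ ℱ Y n ω
      + t₂ * squaredVariation Y n ω + (1 - t₁ - t₂) * L ^ 2)} := by
    filter_upwards [predictableVariation_const_mul μ ℱ L X n] with ω hω
    refine propext (selfNormalized_const_mul_iff hL (partialSum_const_mul L X n ω) ?_).symm
    rw [hω, squaredVariation_const_mul]
    ring
  have hmain := hscaled (h.const_mul L) hYp t₁ t₂ ht₁ ht₂ ht x hx L hL₈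
  rw [← measureReal_congr hevent, ← mul_one (L ^ 2), normalityError_const_mul μ ℱ hL.le] at hmain
  have : 0 ≤ 8 * (L⁻¹ + L ^ (2 * p) * normalityError μ ℱ X n p 1) := by positivity
  linarith

theorem le_two_mul_rpow_of_forall_le_inv_add {d C N r : ℝ} (hr : 0 < r) (hC : 0 < C) (hN : 0 ≤ N)
    (h : ∀ L : ℝ, 0 < L → d ≤ C * (L⁻¹ + L ^ r * N)) : d ≤ 2 * C * N ^ (1 / (r + 1)) := by
  rcases hN.eq_or_lt with rfl | hN
  · have hd : d ≤ 0 := le_of_forall_pos_le_add fun ε hε ↦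
      calc d ≤ C * ((C / ε)⁻¹ + (C / ε) ^ r * 0) := h _ (by positivity)
        _ = 0 + ε := by field_simp; ring
    rwa [Real.zero_rpow (by positivity), mul_zero]
  · have hbalance : (N ^ (-(1 / (r + 1)))) ^ r * N = N ^ (1 / (r + 1)) := by
      rw [← Real.rpow_mul hN.le, ← Real.rpow_add_one hN.ne']
      congr 1
      field_simp
      ring
    have := h (N ^ (-(1 / (r + 1)))) (by positivity)
    rw [hbalance, ← Real.rpow_neg hN.le, neg_neg] at this
    linarith

end BerryEsseen

theorem stmt4_general.{u} {p : ℝ} (hp : 1 ≤ p) :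
    ∃ C, 0 < C ∧ ∀ {Ω : Type u} {mΩ : MeasurableSpace Ω} {μ : Measure Ω} [IsProbabilityMeasure μ]
      {ℱ : Filtration ℕ mΩ} {n : ℕ} {X : ℕ → Ω → ℝ}, IsMartingaleDifference X ℱ μ n →
      (∀ i ∈ Icc 1 n, Integrable (fun ω ↦ |X i ω| ^ (2 * p)) μ) →
      ∀ t₁ t₂ : ℝ, 0 ≤ t₁ → 0 ≤ t₂ → t₁ + t₂ ≤ 1 → ∀ x ≤ 0,
      μ.real {ω | partialSum X n ω ≤ x * √(t₁ * predictableVariation μ ℱ X n ω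
          + t₂ * squaredVariation X n ω + (1 - t₁ - t₂))} - stdNormalCDF x
        ≤ C * normalityError μ ℱ X n p 1 ^ (1 / (2 * p + 1)) := by
  obtain ⟨C, hC, h⟩ := exists_measureReal_selfNormalized_sub_stdNormalCDF_le hp
  exact ⟨2 * C, by positivity, fun hX hXp t₁ t₂ ht₁ ht₂ ht x hx ↦
    le_two_mul_rpow_of_forall_le_inv_add (by positivity) hC (normalityError_nonneg _ _ _ _ _ _)
      (h hX hXp t₁ t₂ ht₁ ht₂ ht x hx)⟩

theorem stmt4 (p : ℝ) (hp : 1 < p) :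
    ∃ C : ℝ, 0 < C ∧
      ∀ (Ω : Type) (mΩ : MeasurableSpace Ω) (μ : Measure Ω),
        IsProbabilityMeasure μ →
        ∀ (ℱ : Filtration ℕ mΩ), ℱ 0 = ⊥ →
        ∀ (n : ℕ) (X : ℕ → Ω → ℝ), X 0 = 0 →
        (∀ i, StronglyMeasurable[ℱ i] (X i)) →
        (∀ i, Integrable (X i) μ) →
        (∀ i ∈ Finset.Icc 1 n, μ[X i | ℱ (i - 1)] =ᵐ[μ] (0 : Ω → ℝ)) →
        ∀ (S : ℕ → Ω → ℝ), (∀ k ω, S k ω = ∑ i ∈ Finset.Icc 1 k, X i ω) →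
        ∀ (QV CV : Ω → ℝ),
          (∀ ω, QV ω = ∑ i ∈ Finset.Icc 1 n, (X i ω) ^ 2) →
          (∀ ω, CV ω = ∑ i ∈ Finset.Icc 1 n, (μ[fun ω' => (X i ω') ^ 2 | ℱ (i - 1)]) ω) →
        (∫ ω, (S n ω) ^ 2 ∂μ) = 1 →
        (∀ i ∈ Finset.Icc 1 n, Integrable (fun ω => |X i ω| ^ (2 * p)) μ) →
        ∀ (N : ℝ),
          N = (∑ i ∈ Finset.Icc 1 n, ∫ ω, |X i ω| ^ (2 * p) ∂μ) + (∫ ω, |CV ω - 1| ^ p ∂μ) →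
      N ≤ 1 →
      ∀ t1 t2 : ℝ, 0 ≤ t1 → 0 ≤ t2 → t1 ≤ 1 → t2 ≤ 1 → t1 + t2 ≤ 1 →
      ∀ x : ℝ, x ≤ 0 →
        (μ {ω | S n ω ≤ x * Real.sqrt (t1 * CV ω + t2 * QV ω + (1 - t1 - t2))}).toReal
          - stdNormalCDF x ≤ C * N ^ (1 / (2 * p + 1)) := by
  obtain ⟨C, hC, hbound⟩ := stmt4_general hp.le
  refine ⟨C, hC, fun Ω _ μ _ ℱ _ n X _ hmeas hint hcond S hS QV CV hQV hCV _ hXp N hN _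
    t1 t2 ht1 ht2 _ _ ht x hx ↦ ?_⟩
  rw [hN, show S n = partialSum X n from funext (hS n),
    show QV = squaredVariation X n from funext hQV,
    show CV = predictableVariation μ ℱ X n from funext hCV]
  exact hbound ⟨fun i _ ↦ hmeas i, fun i _ ↦ hint i, hcond⟩ hXp t1 t2 ht1 ht2 ht x hx
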